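/- arXiv:1904.10867 — 11 statements merged into one kernel-verified Lean document; each statement's English description precedes it below -/
import Mathlib

section
/- Let 0 < p < 1 be real, let N ≥ 1, and let x_1,…,x_N and y_1,…,y_N be real numbers such that all 2N values are pairwise distinct. If the permutation π of {1,…,N} minimizes H(π) = Σ_{i=1}^N |x_i − y_{π(i)}|^p over all permutations, then π is non-crossing: there do not exist indices i₁ ≠ i₂ such that exactly one of the two points x_{i₂}, y_{π(i₂)} lies in the open interval whose endpoints are x_{i₁} and y_{π(i₁)}. -/
/-!
If two edges cross, exchange their partners. The new pair of lengths has a strictly smaller minimum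
and no larger sum than the old pair, so every increasing strictly concave function of the length
assigns it a strictly smaller total: slide the two old lengths apart, at constant sum, until the
smaller one reaches the minimum of the new pair; strict concavity makes this decrease the cost, and
monotonicity then absorbs whatever excess the larger one has.
-/

section StrictConcave

variable {𝕜 β : Type*} [Field 𝕜] [LinearOrder 𝕜] [IsStrictOrderedRing 𝕜]
  [AddCommMonoid β] [PartialOrder β] [IsOrderedCancelAddMonoid β] [Module 𝕜 β]
  {s : Set 𝕜} {f : 𝕜 → β} {a b u v : 𝕜}

theorem map_add_map_lt_of_strictConcaveOn (hf : StrictConcaveOn 𝕜 s f) (ha : a ∈ s) (hb : b ∈ s)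
    (hau : a < u) (hav : a < v) (hsum : a + b = u + v) : f a + f b < f u + f v := by
  have hab : a < b := by linarith
  have hu : u ∈ openSegment 𝕜 a b := by
    rw [openSegment_eq_Ioo hab]
    exact ⟨hau, by linarith⟩
  obtain ⟨r, t, hr, ht, hrt, rfl⟩ := hu
  have hv : v = t • a + r • b := by
    simp only [smul_eq_mul] at hsum ⊢
    linear_combination (-a - b) * hrt - hsum
  calc f a + f b = (r + t) • f a + (r + t) • f b := by rw [hrt, one_smul, one_smul]
    _ = (r • f a + t • f b) + (t • f a + r • f b) := by module
    _ < f (r • a + t • b) + f (t • a + r • b) :=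
      add_lt_add (hf.2 ha hb hab.ne hr ht hrt) (hf.2 ha hb hab.ne ht hr (by rwa [add_comm]))
    _ = f (r • a + t • b) + f v := by rw [hv]

theorem map_add_map_lt_of_min_lt_min_of_add_le_add (hs : IsUpperSet s) (hf : StrictConcaveOn 𝕜 s f)
    (hmono : MonotoneOn f s) (ha : a ∈ s) (hb : b ∈ s) (hmin : min a b < min u v)
    (hsum : a + b ≤ u + v) : f a + f b < f u + f v := by
  wlog hab : a ≤ b generalizing a b
  · rw [add_comm (f a)]
    exact this hb ha (by rwa [min_comm]) (by rwa [add_comm]) (le_of_not_ge hab)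
  obtain ⟨hau, hav⟩ : a < u ∧ a < v := by rwa [min_eq_left hab, lt_min_iff] at hmin
  have hb_le : b ≤ u + v - a := by linarith
  have hmem : u + v - a ∈ s := hs hb_le hb
  calc f a + f b ≤ f a + f (u + v - a) := by gcongr; exact hmono hb hmem hb_le
    _ < f u + f v := map_add_map_lt_of_strictConcaveOn hf ha hmem hau hav (by ring)

end StrictConcave

section Crossing

/-- The edge joining `c` and `d` crosses the edge joining `a` and `b`: exactly one endpoint of the
former lies strictly between the endpoints of the latter. In a matching `a`, `c` are blue points and
`b`, `d` their red partners. -/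
def EdgeCrosses {α : Type*} [LinearOrder α] (a b c d : α) : Prop :=
  Xor (c ∈ Set.uIoo a b) (d ∈ Set.uIoo a b)

theorem EdgeCrosses.reverse {α : Type*} [LinearOrder α] {a b c d : α} (h : EdgeCrosses a b c d) :
    EdgeCrosses b a d c := by
  rw [EdgeCrosses, Set.uIoo_comm]
  exact Or.symm h

variable {G : Type*} [AddCommGroup G] [LinearOrder G] [IsOrderedAddMonoid G] {a b c d : G}

theorem abs_sub_add_abs_sub_of_mem_uIoo (hc : c ∈ Set.uIoo a b) :
    |a - c| + |c - b| = |a - b| := by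
  rw [Set.uIoo_eq_union] at hc
  rcases hc with ⟨hac, hcb⟩ | ⟨hbc, hca⟩ <;> grind

theorem abs_sub_lt_of_mem_uIoo (hc : c ∈ Set.uIoo a b) : |c - b| < |a - b| := by
  have hac : a ≠ c := fun h => Set.left_notMem_uIoo (h ▸ hc)
  rw [← abs_sub_add_abs_sub_of_mem_uIoo hc]
  exact lt_add_of_pos_left _ (abs_sub_pos.2 hac)

theorem abs_sub_lt_or_abs_sub_lt_of_notMem_uIoo (hc : c ∈ Set.uIoo a b) (hd : d ∉ Set.uIoo a b)
    (hbd : b ≠ d) : |a - d| < |c - d| ∨ |c - b| < |c - d| := by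
  rw [Set.uIoo_eq_union] at hc hd
  rcases hc with ⟨hac, hcb⟩ | ⟨hbc, hca⟩
  · have hd' : d ≤ a ∨ b < d := by grind
    grind
  · have hd' : a ≤ d ∨ d < b := by grind
    grind

theorem EdgeCrosses.add_abs_sub_le (h : EdgeCrosses a b c d) :
    |a - d| + |c - b| ≤ |a - b| + |c - d| := by
  wlog hc : c ∈ Set.uIoo a b generalizing a b c d
  · have hd : d ∈ Set.uIoo b a := Set.uIoo_comm a b ▸ (h.resolve_left fun hcd => hc hcd.1).1
    simpa only [abs_sub_comm, add_comm] using this h.reverse hd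
  calc |a - d| + |c - b| ≤ (|a - c| + |c - d|) + |c - b| := by gcongr; exact abs_sub_le a c d
    _ = |a - b| + |c - d| := by rw [add_right_comm, abs_sub_add_abs_sub_of_mem_uIoo hc]

theorem EdgeCrosses.min_abs_sub_lt (h : EdgeCrosses a b c d) (hac : a ≠ c) (hbd : b ≠ d) :
    min |a - d| |c - b| < min |a - b| |c - d| := by
  wlog hc : c ∈ Set.uIoo a b ∧ d ∉ Set.uIoo a b generalizing a b c d
  · have hd : d ∈ Set.uIoo b a ∧ c ∉ Set.uIoo b a := Set.uIoo_comm a b ▸ h.resolve_left hc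
    simpa only [abs_sub_comm, min_comm] using this h.reverse hbd hac hd
  obtain ⟨hc, hd⟩ := hc
  exact lt_min (min_lt_of_right_lt (abs_sub_lt_of_mem_uIoo hc))
    (min_lt_iff.2 (abs_sub_lt_or_abs_sub_lt_of_notMem_uIoo hc hd hbd))

end Crossing

section Matching

/-- The total cost of matching each point `x i` with `y (π i)`, when an edge of length `l` costs
`f l`. -/
def matchingCost {ι κ G β : Type*} [Fintype ι] [AddCommGroup G] [Lattice G] [AddCommMonoid β]
    (f : G → β) (x : ι → G) (y : κ → G) (π : ι ≃ κ) : β :=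
  ∑ i, f |x i - y (π i)|

theorem matchingCost_swap_trans_lt {ι κ G β : Type*} [Fintype ι] [DecidableEq ι]
    [AddCommGroup G] [Lattice G] [AddCommMonoid β] [PartialOrder β] [IsOrderedCancelAddMonoid β]
    {f : G → β} {x : ι → G} {y : κ → G} {π : ι ≃ κ} {i j : ι} (hij : i ≠ j)
    (hlt : f |x i - y (π j)| + f |x j - y (π i)| < f |x i - y (π i)| + f |x j - y (π j)|) :
    matchingCost f x y ((Equiv.swap i j).trans π) < matchingCost f x y π := by
  have hrest : ∀ k ∈ ({i, j} : Finset ι)ᶜ,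
      f |x k - y (π (Equiv.swap i j k))| = f |x k - y (π k)| := by
    intro k hk
    obtain ⟨hki, hkj⟩ : k ≠ i ∧ k ≠ j := by simpa using hk
    rw [Equiv.swap_apply_of_ne_of_ne hki hkj]
  calc ∑ k, f |x k - y (π (Equiv.swap i j k))|
      = f |x i - y (π j)| + f |x j - y (π i)| + ∑ k ∈ {i, j}ᶜ, f |x k - y (π k)| := by
        rw [← Finset.sum_add_sum_compl {i, j}, Finset.sum_pair hij, Finset.sum_congr rfl hrest,
          Equiv.swap_apply_left, Equiv.swap_apply_right]
    _ < f |x i - y (π i)| + f |x j - y (π j)| + ∑ k ∈ {i, j}ᶜ, f |x k - y (π k)| := by gcongr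
    _ = ∑ k, f |x k - y (π k)| := by rw [← Finset.sum_add_sum_compl {i, j}, Finset.sum_pair hij]

theorem optimal_matching_noncrossing_general {ι κ 𝕜 β : Type*} [Fintype ι] [DecidableEq ι]
    [Field 𝕜] [LinearOrder 𝕜] [IsStrictOrderedRing 𝕜]
    [AddCommMonoid β] [PartialOrder β] [IsOrderedCancelAddMonoid β] [Module 𝕜 β]
    {f : 𝕜 → β} (hf : StrictConcaveOn 𝕜 (Set.Ici 0) f) (hmono : MonotoneOn f (Set.Ici 0))
    {x : ι → 𝕜} {y : κ → 𝕜} (hx : Function.Injective x) (hy : Function.Injective y) {π : ι ≃ κ}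
    (hopt : ∀ i j, matchingCost f x y π ≤ matchingCost f x y ((Equiv.swap i j).trans π)) :
    ¬ ∃ i j, i ≠ j ∧ EdgeCrosses (x i) (y (π i)) (x j) (y (π j)) := by
  rintro ⟨i, j, hij, hcross⟩
  have hmin := hcross.min_abs_sub_lt (hx.ne hij) (hy.ne (π.injective.ne hij))
  have hlt := map_add_map_lt_of_min_lt_min_of_add_le_add (isUpperSet_Ici 0) hf hmono
    (abs_nonneg _) (abs_nonneg _) hmin hcross.add_abs_sub_le
  exact (matchingCost_swap_trans_lt hij hlt).not_ge (hopt i j)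

end Matching

theorem optimal_matching_noncrossing (p : ℝ) (hp0 : 0 < p) (hp1 : p < 1)
    (N : ℕ) (hN : 1 ≤ N) (x y : Fin N → ℝ)
    (hx : Function.Injective x) (hy : Function.Injective y)
    (hxy : ∀ i j, x i ≠ y j)
    (π : Equiv.Perm (Fin N))
    (hopt : ∀ σ : Equiv.Perm (Fin N),
      ∑ i, |x i - y (π i)| ^ p ≤ ∑ i, |x i - y (σ i)| ^ p) :
    ¬ ∃ i₁ i₂ : Fin N, i₁ ≠ i₂ ∧
      Xor' (x i₂ ∈ Set.Ioo (min (x i₁) (y (π i₁))) (max (x i₁) (y (π i₁))))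
           (y (π i₂) ∈ Set.Ioo (min (x i₁) (y (π i₁))) (max (x i₁) (y (π i₁)))) :=
  optimal_matching_noncrossing_general (Real.strictConcaveOn_rpow hp0 hp1)
    (Real.monotoneOn_rpow_Ici_of_exponent_nonneg hp0.le) hx hy fun _ _ => hopt _
end

section
/- Let 0 < p < 1 be real, let N ≥ 1, and let x_1,…,x_N and y_1,…,y_N be real numbers such that all 2N values are pairwise distinct. If the permutation π of {1,…,N} minimizes H(π) = Σ_{i=1}^N |x_i − y_{π(i)}|^p over all permutations, then π is sliced: for every index i, the number of indices j with x_j lying in the open interval with endpoints x_i and y_{π(i)} equals the number of indices j with y_j lying in that open interval. -/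
/-!
If `x j` lies strictly between `x i` and `y (π i)` but `y (π j)` does not, or the other way round,
then exchanging the partners of `x i` and `x j` makes the cost strictly smaller: the two segments
cross, and the exchange replaces them either by two shorter segments, when monotonicity of the cost
suffices, or by two nested segments of the same total length, when strict concavity applies.
Hence an optimal `π` restricts to a bijection from the `x`-points to the `y`-points strictly between
`x i` and `y (π i)`.
-/

section StrictConcave

variable {𝕜 : Type*} [Field 𝕜] [LinearOrder 𝕜] [IsStrictOrderedRing 𝕜] {g : 𝕜 → 𝕜}

theorem add_lt_add_of_strictConcaveOn {s : Set 𝕜} (hg : StrictConcaveOn 𝕜 s g) {a b c d : 𝕜}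
    (ha : a ∈ s) (hd : d ∈ s) (hab : a < b) (hbd : b < d) (hsum : a + d = b + c) :
    g a + g d < g b + g c := by
  have had : a < d := hab.trans hbd
  obtain ⟨u, v, hu, hv, huv, hb⟩ : b ∈ openSegment 𝕜 a d := openSegment_eq_Ioo had ▸ ⟨hab, hbd⟩
  have hc : v • a + u • d = c := by
    simp only [smul_eq_mul] at hb ⊢
    linear_combination (a + d) * huv - hb + hsum
  have gb_gt : u • g a + v • g d < g b := hb ▸ hg.2 ha hd had.ne hu hv huv
  have gc_gt : v • g a + u • g d < g c := hc ▸ hg.2 ha hd had.ne hv hu (add_comm u v ▸ huv)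
  simp only [smul_eq_mul] at gb_gt gc_gt
  linear_combination gb_gt + gc_gt - (g a + g d) * huv

theorem strictMonoOn_Ici_of_strictConcaveOn {a : 𝕜} (hg : StrictConcaveOn 𝕜 (Set.Ici a) g)
    (hmono : MonotoneOn g (Set.Ici a)) : StrictMonoOn g (Set.Ici a) := by
  intro s hs t ht hst
  have ht' : t + 1 ∈ Set.Ici a := Set.mem_Ici.2 (ht.trans (lt_add_one t).le)
  have hst' : s < t + 1 := hst.trans (lt_add_one t)
  calc g s = min (g s) (g (t + 1)) := (min_eq_left (hmono hs ht' hst'.le)).symm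
    _ < g t := hg.lt_on_openSegment hs ht' hst'.ne
      (openSegment_eq_Ioo hst' ▸ ⟨hst, lt_add_one t⟩)

theorem exchange_lt_of_mem_Ioo (hg : StrictConcaveOn 𝕜 (Set.Ici 0) g)
    (hmono : MonotoneOn g (Set.Ici 0)) {a b c d : 𝕜} (hc : c ∈ Set.Ioo a b)
    (hd : d ∉ Set.Ioo a b) (hdb : d ≠ b) :
    g |a - d| + g |c - b| < g |a - b| + g |c - d| := by
  obtain ⟨hac, hcb⟩ := hc
  rw [abs_sub_comm a b, abs_of_pos (sub_pos.2 (hac.trans hcb)),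
    abs_sub_comm c b, abs_of_pos (sub_pos.2 hcb)]
  rcases le_or_gt d a with hda | had
  · have hstrict := strictMonoOn_Ici_of_strictConcaveOn hg hmono
    rw [abs_of_nonneg (sub_nonneg.2 hda), abs_of_pos (sub_pos.2 (hda.trans_lt hac)),
      add_comm (g (b - a))]
    exact add_lt_add
      (hstrict (sub_nonneg.2 hda) (sub_nonneg.2 (hda.trans hac.le)) (sub_lt_sub_right hac d))
      (hstrict (sub_nonneg.2 hcb.le) (sub_nonneg.2 (hac.trans hcb).le) (sub_lt_sub_left hac b))
  · have hbd : b < d := (not_lt.1 fun hdb' ↦ hd ⟨had, hdb'⟩).lt_of_ne' hdb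
    rw [abs_sub_comm a d, abs_of_pos (sub_pos.2 had),
      abs_sub_comm c d, abs_of_pos (sub_pos.2 (hcb.trans hbd)), add_comm (g (d - a))]
    exact add_lt_add_of_strictConcaveOn hg (sub_nonneg.2 hcb.le) (sub_nonneg.2 had.le)
      (sub_lt_sub_left hac b) (sub_lt_sub_right hbd a) (by ring)

theorem exchange_lt_of_mem_uIoo (hg : StrictConcaveOn 𝕜 (Set.Ici 0) g)
    (hmono : MonotoneOn g (Set.Ici 0)) {a b c d : 𝕜} (hc : c ∈ Set.uIoo a b)
    (hd : d ∉ Set.uIoo a b) (hdb : d ≠ b) :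
    g |a - d| + g |c - b| < g |a - b| + g |c - d| := by
  rcases le_total a b with hab | hba
  · rw [Set.uIoo_of_le hab] at hc hd
    exact exchange_lt_of_mem_Ioo hg hmono hc hd hdb
  · rw [Set.uIoo_of_ge hba] at hc hd
    have hc' : -c ∈ Set.Ioo (-a) (-b) := ⟨neg_lt_neg hc.2, neg_lt_neg hc.1⟩
    have hd' : -d ∉ Set.Ioo (-a) (-b) := fun h ↦ hd ⟨neg_lt_neg_iff.1 h.2, neg_lt_neg_iff.1 h.1⟩
    simpa only [neg_sub_neg, abs_sub_comm] using
      exchange_lt_of_mem_Ioo hg hmono hc' hd' (neg_injective.ne hdb)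

theorem mem_uIoo_iff_of_le_exchange (hg : StrictConcaveOn 𝕜 (Set.Ici 0) g)
    (hmono : MonotoneOn g (Set.Ici 0)) {a b c d : 𝕜} (hac : a ≠ c) (hbd : b ≠ d)
    (hle : g |a - b| + g |c - d| ≤ g |a - d| + g |c - b|) :
    c ∈ Set.uIoo a b ↔ d ∈ Set.uIoo a b := by
  constructor
  · intro hc
    by_contra hd
    exact (exchange_lt_of_mem_uIoo hg hmono hc hd hbd.symm).not_ge hle
  · intro hd
    by_contra hc
    rw [Set.uIoo_comm] at hc hd
    have hlt := exchange_lt_of_mem_uIoo hg hmono hd hc hac.symm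
    rw [abs_sub_comm b c, abs_sub_comm d a, abs_sub_comm b a, abs_sub_comm d c, add_comm] at hlt
    exact hlt.not_ge hle

end StrictConcave

section Matching

variable {ι κ : Type*} [Fintype ι]

/-- A matching `π` of `ι` with `κ` is optimal for the pairwise cost `c` if it minimizes the total
cost among all matchings. -/
def IsOptimalMatching {M : Type*} [AddCommMonoid M] [LE M] (c : ι → κ → M) (π : ι ≃ κ) : Prop :=
  ∀ σ : ι ≃ κ, ∑ i, c i (π i) ≤ ∑ i, c i (σ i)

/-- A matching `π` of the points `x` with the points `y` is sliced if strictly between any two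
matched points there are as many points of `x` as of `y`, counted with multiplicity. -/
def IsSliced {α : Type*} [LinearOrder α] [Fintype κ] (x : ι → α) (y : κ → α) (π : ι ≃ κ) : Prop :=
  ∀ i : ι,
    (Finset.univ.filter fun j ↦ x j ∈ Set.Ioo (min (x i) (y (π i))) (max (x i) (y (π i)))).card =
    (Finset.univ.filter fun k ↦ y k ∈ Set.Ioo (min (x i) (y (π i))) (max (x i) (y (π i)))).card

theorem IsOptimalMatching.le_exchange {M : Type*} [AddCommGroup M] [PartialOrder M]
    [IsOrderedAddMonoid M] {c : ι → κ → M} {π : ι ≃ κ} (hπ : IsOptimalMatching c π) (i j : ι) :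
    c i (π i) + c j (π j) ≤ c i (π j) + c j (π i) := by
  classical
  rcases eq_or_ne i j with rfl | hij
  · rfl
  let σ : ι ≃ κ := (Equiv.swap i j).trans π
  have hsum : ∑ k, (c k (σ k) - c k (π k)) =
      (c i (σ i) - c i (π i)) + (c j (σ j) - c j (π j)) :=
    Fintype.sum_eq_add i j hij fun k hk ↦ by
      simp only [σ, Equiv.trans_apply, Equiv.swap_apply_of_ne_of_ne hk.1 hk.2, sub_self]
  have hσi : σ i = π j := congrArg π (Equiv.swap_apply_left i j)
  have hσj : σ j = π i := congrArg π (Equiv.swap_apply_right i j)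
  rw [Finset.sum_sub_distrib, hσi, hσj, sub_add_sub_comm] at hsum
  exact sub_nonneg.1 (hsum ▸ sub_nonneg.2 (hπ σ))

theorem optimal_matching_sliced_general {𝕜 : Type*} [Field 𝕜] [LinearOrder 𝕜]
    [IsStrictOrderedRing 𝕜] [Fintype κ] {g : 𝕜 → 𝕜} (hg : StrictConcaveOn 𝕜 (Set.Ici 0) g)
    (hmono : MonotoneOn g (Set.Ici 0)) {x : ι → 𝕜} {y : κ → 𝕜} (hx : Function.Injective x)
    (hy : Function.Injective y) {π : ι ≃ κ}
    (hπ : IsOptimalMatching (fun i k ↦ g |x i - y k|) π) : IsSliced x y π := by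
  intro i
  refine Finset.card_equiv π fun j ↦ ?_
  rw [Finset.mem_filter_univ, Finset.mem_filter_univ, Set.Ioo_min_max]
  rcases eq_or_ne i j with rfl | hij
  · exact iff_of_false Set.left_notMem_uIoo Set.right_notMem_uIoo
  · exact mem_uIoo_iff_of_le_exchange hg hmono (hx.ne hij) (hy.ne (π.injective.ne hij))
      (hπ.le_exchange i j)

end Matching

theorem optimal_matching_sliced (p : ℝ) (hp0 : 0 < p) (hp1 : p < 1)
    (N : ℕ) (hN : 1 ≤ N) (x y : Fin N → ℝ)
    (hx : Function.Injective x) (hy : Function.Injective y)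
    (hxy : ∀ i j, x i ≠ y j)
    (π : Equiv.Perm (Fin N))
    (hopt : ∀ σ : Equiv.Perm (Fin N),
      ∑ i, |x i - y (π i)| ^ p ≤ ∑ i, |x i - y (σ i)| ^ p) :
    ∀ i : Fin N,
      (Finset.univ.filter (fun j : Fin N =>
        x j ∈ Set.Ioo (min (x i) (y (π i))) (max (x i) (y (π i))))).card =
      (Finset.univ.filter (fun j : Fin N =>
        y j ∈ Set.Ioo (min (x i) (y (π i))) (max (x i) (y (π i))))).card :=
  optimal_matching_sliced_general (Real.strictConcaveOn_rpow hp0 hp1)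
    (Real.monotoneOn_rpow_Ici_of_exponent_nonneg hp0.le) hx hy hopt
end

section
/- Let 0 ≤ p ≤ 1 and let n > 1 be real numbers. Then (n + p − 1)^p ≤ Γ(n+p)/Γ(n) ≤ n^p, where Γ is the real Gamma function. -/
/-!
Log-convexity of `Γ` on `[x, x + 1]`, together with `Γ (x + 1) = x * Γ x`, gives
`Γ (x + p) ≤ x ^ p * Γ x` for `0 ≤ p ≤ 1`; at `x = n` this is the upper bound. The lower bound is
the same inequality with base point `n + p - 1` and exponent `1 - p`, whose left side is `Γ n`.
-/

open Real

theorem Gamma_add_le_rpow_mul_Gamma {x p : ℝ} (hx : 0 < x) (hp0 : 0 ≤ p) (hp1 : p ≤ 1) :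
    Gamma (x + p) ≤ x ^ p * Gamma x := by
  rcases hp0.eq_or_lt with rfl | hp0'
  · simp
  rcases hp1.eq_or_lt with rfl | hp1'
  · rw [Gamma_add_one hx.ne', rpow_one]
  have hΓ : 0 < Gamma x := Gamma_pos_of_pos hx
  calc
    Gamma (x + p) = Gamma ((1 - p) * x + p * (x + 1)) := by ring_nf
    _ ≤ Gamma x ^ (1 - p) * Gamma (x + 1) ^ p :=
      Gamma_mul_add_mul_le_rpow_Gamma_mul_rpow_Gamma hx (by positivity) (sub_pos.2 hp1') hp0'
        (sub_add_cancel 1 p)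
    _ = x ^ p * (Gamma x ^ (1 - p) * Gamma x ^ p) := by
      rw [Gamma_add_one hx.ne', mul_rpow hx.le hΓ.le, mul_left_comm]
    _ = x ^ p * Gamma x := by rw [← rpow_add hΓ, sub_add_cancel, rpow_one]

theorem rpow_mul_Gamma_add_one_sub_le {x p : ℝ} (hx : 0 < x) (hp0 : 0 ≤ p) (hp1 : p ≤ 1) :
    x ^ p * Gamma (x + (1 - p)) ≤ Gamma (x + 1) :=
  calc
    x ^ p * Gamma (x + (1 - p)) ≤ x ^ p * (x ^ (1 - p) * Gamma x) := by
      gcongr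
      exact Gamma_add_le_rpow_mul_Gamma hx (sub_nonneg.2 hp1) (sub_le_self 1 hp0)
    _ = x * Gamma x := by rw [← mul_assoc, ← rpow_add hx, add_sub_cancel, rpow_one]
    _ = Gamma (x + 1) := (Gamma_add_one hx.ne').symm

theorem rising_factorial_bounds_general {p n : ℝ} (hp0 : 0 ≤ p) (hp1 : p ≤ 1) (hn : 0 < n)
    (hnp : 1 < n + p) :
    (n + p - 1) ^ p ≤ Gamma (n + p) / Gamma n ∧ Gamma (n + p) / Gamma n ≤ n ^ p := by
  have hΓ : 0 < Gamma n := Gamma_pos_of_pos hn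
  rw [le_div_iff₀ hΓ, div_le_iff₀ hΓ]
  refine ⟨?_, Gamma_add_le_rpow_mul_Gamma hn hp0 hp1⟩
  have lower := rpow_mul_Gamma_add_one_sub_le (sub_pos.2 hnp) hp0 hp1
  rwa [sub_add_sub_cancel, add_sub_cancel_right, sub_add_cancel] at lower

theorem rising_factorial_bounds (p n : ℝ) (hp0 : 0 ≤ p) (hp1 : p ≤ 1) (hn : 1 < n) :
    (n + p - 1) ^ p ≤ Real.Gamma (n + p) / Real.Gamma n ∧
    Real.Gamma (n + p) / Real.Gamma n ≤ n ^ p :=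
  rising_factorial_bounds_general hp0 hp1 (by linarith) (by linarith)
end

section
/- Let N ≥ 1 be a natural number and let 0 ≤ p ≤ 1 be real. Then the following chain of inequalities holds: (1 − 1/(2N+1))^{p(1−p)} ≤ (1 − (1−p)/(2N+1))^p ≤ Γ(2N+1+p)/(Γ(2N+1)·(2N+1)^p) ≤ 1. -/
/-!
Log-convexity of `Γ` on `[x, x + 1]` gives `Γ(x + p) ≤ Γ(x) x ^ p`. The same bound on
`[x + p, x + p + 1]` gives Wendel's reverse inequality `x Γ(x) ≤ Γ(x + p) (x + p) ^ (1 - p)`, and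
`x`, being the weighted arithmetic mean of `x + p - 1` and `x + p`, dominates their geometric mean
`(x + p - 1) ^ p (x + p) ^ (1 - p)`, so `(x + p - 1) ^ p Γ(x) ≤ Γ(x + p)`. The leftmost inequality
of the chain is Bernoulli's, raised to the power `p`.
-/

open Real

theorem one_sub_rpow_mul_le_one_sub_mul_rpow {s q p : ℝ} (hs : s ≤ 1) (hq0 : 0 ≤ q) (hq1 : q ≤ 1)
    (hp : 0 ≤ p) : (1 - s) ^ (p * q) ≤ (1 - q * s) ^ p := by
  have hs' : 0 ≤ 1 - s := sub_nonneg.2 hs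
  have bernoulli : (1 - s) ^ q ≤ 1 - q * s := by
    simpa only [mul_neg, ← sub_eq_add_neg] using
      rpow_one_add_le_one_add_mul_self (neg_le_neg hs) hq0 hq1
  calc (1 - s) ^ (p * q) = ((1 - s) ^ q) ^ p := by rw [mul_comm, rpow_mul hs']
    _ ≤ (1 - q * s) ^ p := rpow_le_rpow (rpow_nonneg hs' q) bernoulli hp

section GammaBounds

variable {x p : ℝ}

theorem Gamma_add_le_Gamma_mul_rpow (hx : 0 < x) (hp0 : 0 ≤ p) (hp1 : p ≤ 1) :
    Gamma (x + p) ≤ Gamma x * x ^ p := by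
  rcases hp0.eq_or_lt with rfl | hp0
  · simp
  rcases hp1.eq_or_lt with rfl | hp1
  · rw [Gamma_add_one hx.ne', rpow_one, mul_comm]
  have hΓ : 0 < Gamma x := Gamma_pos_of_pos hx
  calc Gamma (x + p) = Gamma ((1 - p) * x + p * (x + 1)) := by ring_nf
    _ ≤ Gamma x ^ (1 - p) * Gamma (x + 1) ^ p :=
      Gamma_mul_add_mul_le_rpow_Gamma_mul_rpow_Gamma hx (by linarith) (sub_pos.2 hp1) hp0
        (sub_add_cancel 1 p)
    _ = Gamma x ^ (1 - p) * Gamma x ^ p * x ^ p := by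
      rw [Gamma_add_one hx.ne', mul_rpow hx.le hΓ.le]; ring
    _ = Gamma x * x ^ p := by rw [← rpow_add hΓ, sub_add_cancel, rpow_one]

theorem mul_Gamma_le_Gamma_add_mul_rpow (hx : 0 < x) (hp0 : 0 ≤ p) (hp1 : p ≤ 1) :
    x * Gamma x ≤ Gamma (x + p) * (x + p) ^ (1 - p) :=
  calc x * Gamma x = Gamma (x + p + (1 - p)) := by
        rw [← Gamma_add_one hx.ne', add_add_sub_cancel]
    _ ≤ Gamma (x + p) * (x + p) ^ (1 - p) :=
      Gamma_add_le_Gamma_mul_rpow (add_pos_of_pos_of_nonneg hx hp0) (sub_nonneg.2 hp1)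
        (sub_le_self 1 hp0)

theorem Gamma_mul_rpow_le_Gamma_add (hx : 0 < x) (hp0 : 0 ≤ p) (hp1 : p ≤ 1)
    (hxp : 0 ≤ x + p - 1) : Gamma x * (x + p - 1) ^ p ≤ Gamma (x + p) := by
  have hxp' : 0 < x + p := add_pos_of_pos_of_nonneg hx hp0
  have amgm : (x + p - 1) ^ p * (x + p) ^ (1 - p) ≤ x := by
    convert geom_mean_le_arith_mean2_weighted hp0 (sub_nonneg.2 hp1) hxp hxp'.le
      (add_sub_cancel p 1) using 1
    ring
  refine le_of_mul_le_mul_right ?_ (rpow_pos_of_pos hxp' (1 - p))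
  calc Gamma x * (x + p - 1) ^ p * (x + p) ^ (1 - p)
      = (x + p - 1) ^ p * (x + p) ^ (1 - p) * Gamma x := by ring
    _ ≤ x * Gamma x := mul_le_mul_of_nonneg_right amgm (Gamma_pos_of_pos hx).le
    _ ≤ Gamma (x + p) * (x + p) ^ (1 - p) := mul_Gamma_le_Gamma_add_mul_rpow hx hp0 hp1

theorem one_sub_div_rpow_le_Gamma_add_div (hx : 0 < x) (hp0 : 0 ≤ p) (hp1 : p ≤ 1)
    (hxp : 0 ≤ x + p - 1) :
    (1 - (1 - p) / x) ^ p ≤ Gamma (x + p) / (Gamma x * x ^ p) := by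
  have hΓ : 0 < Gamma x := Gamma_pos_of_pos hx
  have hbase : 1 - (1 - p) / x = (x + p - 1) / x := by field_simp; ring
  calc (1 - (1 - p) / x) ^ p = Gamma x * (x + p - 1) ^ p / (Gamma x * x ^ p) := by
        rw [hbase, div_rpow hxp hx.le, mul_div_mul_left _ _ hΓ.ne']
    _ ≤ Gamma (x + p) / (Gamma x * x ^ p) := by
      gcongr
      exact Gamma_mul_rpow_le_Gamma_add hx hp0 hp1 hxp

theorem Gamma_add_div_le_one (hx : 0 < x) (hp0 : 0 ≤ p) (hp1 : p ≤ 1) :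
    Gamma (x + p) / (Gamma x * x ^ p) ≤ 1 :=
  div_le_one_of_le₀ (Gamma_add_le_Gamma_mul_rpow hx hp0 hp1)
    (mul_nonneg (Gamma_pos_of_pos hx).le (rpow_nonneg hx.le p))

theorem ES_PPP_ratio_bounds_general (hx : 1 ≤ x) (hp0 : 0 ≤ p) (hp1 : p ≤ 1) :
    (1 - 1 / x) ^ (p * (1 - p)) ≤ (1 - (1 - p) / x) ^ p ∧
    (1 - (1 - p) / x) ^ p ≤ Gamma (x + p) / (Gamma x * x ^ p) ∧
    Gamma (x + p) / (Gamma x * x ^ p) ≤ 1 := by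
  have hx0 : 0 < x := one_pos.trans_le hx
  refine ⟨?_, one_sub_div_rpow_le_Gamma_add_div hx0 hp0 hp1 (by linarith),
    Gamma_add_div_le_one hx0 hp0 hp1⟩
  simpa only [mul_one_div] using one_sub_rpow_mul_le_one_sub_mul_rpow
    ((div_le_one hx0).2 hx) (sub_nonneg.2 hp1) (sub_le_self 1 hp0) hp0

end GammaBounds

theorem ES_PPP_ratio_bounds (N : ℕ) (hN : 1 ≤ N) (p : ℝ) (hp0 : 0 ≤ p) (hp1 : p ≤ 1) :
    (1 - 1 / (2 * (N : ℝ) + 1)) ^ (p * (1 - p)) ≤ (1 - (1 - p) / (2 * (N : ℝ) + 1)) ^ p ∧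
    (1 - (1 - p) / (2 * (N : ℝ) + 1)) ^ p ≤
      Real.Gamma (2 * (N : ℝ) + 1 + p) / (Real.Gamma (2 * (N : ℝ) + 1) * (2 * (N : ℝ) + 1) ^ p) ∧
    Real.Gamma (2 * (N : ℝ) + 1 + p) / (Real.Gamma (2 * (N : ℝ) + 1) * (2 * (N : ℝ) + 1) ^ p) ≤ 1 :=
  ES_PPP_ratio_bounds_general (le_add_of_nonneg_left (by positivity)) hp0 hp1
end

section
/- For every natural number n, Σ_{k=0}^{n} C_k · binom(2(n−k), n−k) = (1/2) · binom(2n+2, n+1), where C_k = binom(2k,k)/(k+1) is the k-th Catalan number. -/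
/-!
Write `C` and `B` for the generating functions of the Catalan numbers and of the central binomial
coefficients. Since `(n + 1) * catalan n = centralBinom n`, the series `B` is the derivative of
`C * X`, while the quadratic equation `C = C ^ 2 * X + 1` says that `(C * X) ^ 2 + X = C * X`.
Differentiating the latter gives `2 * (C * B) * X + 1 = B`, and it remains to compare coefficients.
-/

section GeneratingFunctions

open PowerSeries

/-- The generating function `∑ n, centralBinom n * X ^ n` of the central binomial coefficients,
with coefficients in `ℕ` to match `PowerSeries.catalanSeries`. -/
def centralBinomSeries : PowerSeries ℕ := PowerSeries.mk Nat.centralBinom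

@[simp]
theorem coeff_centralBinomSeries (n : ℕ) : coeff n centralBinomSeries = n.centralBinom :=
  coeff_mk n Nat.centralBinom

theorem derivative_catalanSeries_mul_X : d⁄dX ℕ (catalanSeries * X) = centralBinomSeries := by
  ext n
  rw [coeff_derivative, coeff_succ_mul_X, catalanSeries_coeff, coeff_centralBinomSeries,
    ← succ_mul_catalan_eq_centralBinom, Nat.cast_id, mul_comm]

theorem catalanSeries_mul_X_sq_add_X : (catalanSeries * X) ^ 2 + X = catalanSeries * X :=
  calc (catalanSeries * X) ^ 2 + X = (catalanSeries ^ 2 * X + 1) * X := by ring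
    _ = catalanSeries * X := by rw [catalanSeries_sq_mul_X_add_one]

theorem two_mul_catalanSeries_mul_centralBinomSeries_mul_X_add_one :
    2 * (catalanSeries * centralBinomSeries) * X + 1 = centralBinomSeries :=
  calc 2 * (catalanSeries * centralBinomSeries) * X + 1
      = 2 * (catalanSeries * X) * d⁄dX ℕ (catalanSeries * X) + 1 := by
        rw [derivative_catalanSeries_mul_X]; ring
    _ = d⁄dX ℕ ((catalanSeries * X) ^ 2 + X) := by
        rw [map_add, derivative_pow, derivative_X, Nat.cast_ofNat, pow_one]
    _ = centralBinomSeries := by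
        rw [catalanSeries_mul_X_sq_add_X, derivative_catalanSeries_mul_X]

theorem two_mul_coeff_catalanSeries_mul_centralBinomSeries (n : ℕ) :
    2 * coeff n (catalanSeries * centralBinomSeries) = (n + 1).centralBinom := by
  have h := congrArg (coeff (n + 1)) two_mul_catalanSeries_mul_centralBinomSeries_mul_X_add_one
  rwa [map_add, coeff_succ_mul_X, coeff_one, if_neg n.succ_ne_zero, add_zero, two_mul, map_add,
    ← two_mul, coeff_centralBinomSeries] at h

theorem coeff_catalanSeries_mul_centralBinomSeries (n : ℕ) :
    coeff n (catalanSeries * centralBinomSeries) =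
      ∑ k ∈ Finset.range (n + 1), catalan k * (n - k).centralBinom := by
  simp only [coeff_mul, catalanSeries_coeff, coeff_centralBinomSeries]
  exact Finset.Nat.sum_antidiagonal_eq_sum_range_succ (fun i j ↦ catalan i * j.centralBinom) n

end GeneratingFunctions

theorem catalan_centralBinom_convolution (n : ℕ) :
    2 * ∑ k ∈ Finset.range (n + 1), catalan k * Nat.choose (2 * (n - k)) (n - k) =
      Nat.choose (2 * n + 2) (n + 1) := by
  simp only [← Nat.centralBinom_eq_two_mul_choose]
  rw [← coeff_catalanSeries_mul_centralBinomSeries,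
    two_mul_coeff_catalanSeries_mul_centralBinomSeries, Nat.centralBinom_eq_two_mul_choose, mul_add,
    mul_one]
end

section
/- Fix a natural number k. Then the limit as N → ∞ of v_{N,k} / (N · B_N) equals C_k / (2 · 4^k), where v_{N,k} = C_k · (4^{N−k−1} + ((N−k)/2) · B_{N−k}), B_n = binom(2n,n), and C_k = binom(2k,k)/(k+1). -/
/-- `v N k = C_k (4^(N-k-1) + ((N-k)/2) B_{N-k})`, the number of edges of horizontal
length `2k+1` among all Dyck matchings on `2N` points (as a real number). -/
noncomputable def dyckEdgeCount (N k : ℕ) : ℝ :=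
  (catalan k : ℝ) *
    (4 ^ (N - k - 1) + ((N : ℝ) - (k : ℝ)) / 2 * (Nat.choose (2 * (N - k)) (N - k) : ℝ))

/-!
Wallis' product gives `B_n ~ 4 ^ n / √(π n)`. Hence `4 ^ n = o(n B_n)`, so the power of four in
`v_{N,k}` is negligible, and `B_{N-k} / B_N → 4 ^ (-k)`; with `(N - k) / N → 1` the second summand
of `v_{N,k}` contributes `C_k / (2 · 4 ^ k)`.
-/

open Asymptotics Filter Topology
open scoped Real

theorem four_pow_div_centralBinom_sq (n : ℕ) :
    ((4 : ℝ) ^ n / n.centralBinom) ^ 2 = (2 * n + 1) * Real.Wallis.W n := by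
  have hfact : (n.centralBinom : ℝ) * n.factorial * n.factorial = (2 * n).factorial := by
    rw [Nat.centralBinom_eq_two_mul_choose, two_mul]
    exact_mod_cast Nat.add_choose_mul_factorial_mul_factorial n n
  have hB : (n.centralBinom : ℝ) ≠ 0 := mod_cast n.centralBinom_ne_zero
  have hfour : (2 : ℝ) ^ (4 * n) = (4 ^ n) ^ 2 := by
    rw [pow_mul, pow_right_comm (4 : ℝ)]
    norm_num
  rw [Real.Wallis.W_eq_factorial_ratio, ← hfact, hfour]
  field_simp

theorem centralBinom_isEquivalent :
    (fun n : ℕ => (n.centralBinom : ℝ)) ~[atTop] fun n : ℕ => 4 ^ n / √(π * n) := by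
  have hW : Tendsto (fun n : ℕ => π / 2 * (Real.Wallis.W n)⁻¹) atTop (𝓝 1) := by
    have hpi : π / 2 ≠ 0 := by positivity
    simpa only [mul_inv_cancel₀ hpi] using
      (Real.Wallis.tendsto_W_nhds_pi_div_two.inv₀ hpi).const_mul (π / 2)
  have hsqrt : Tendsto (fun n : ℕ => √(n / (n + 1 / 2) * (π / 2 * (Real.Wallis.W n)⁻¹)))
      atTop (𝓝 1) := by
    simpa only [mul_one, Real.sqrt_one] using
      ((tendsto_natCast_div_add_atTop (1 / 2 : ℝ)).mul hW).sqrt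
  refine isEquivalent_of_tendsto_one (hsqrt.congr fun n => ?_)
  have hB : (0 : ℝ) < n.centralBinom := mod_cast n.centralBinom_pos
  have hWpos := Real.Wallis.W_pos n
  have hquot : (n : ℝ) / (n + 1 / 2) * (π / 2 * (Real.Wallis.W n)⁻¹) =
      π * n / (4 ^ n / n.centralBinom) ^ 2 := by
    rw [four_pow_div_centralBinom_sq]
    field_simp
  rw [hquot, Real.sqrt_div' _ (sq_nonneg _), Real.sqrt_sq (by positivity), Pi.div_apply,
    div_div_eq_mul_div, div_div_eq_mul_div, mul_comm]

theorem tendsto_four_pow_div_mul_centralBinom :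
    Tendsto (fun n : ℕ => (4 : ℝ) ^ n / (n * n.centralBinom)) atTop (𝓝 0) := by
  have hlim : Tendsto (fun n : ℕ => √(π / n)) atTop (𝓝 0) := by
    simpa only [Real.sqrt_zero] using (tendsto_const_div_atTop_nhds_zero_nat π).sqrt
  have hequiv : (fun n : ℕ => (4 : ℝ) ^ n / (n * n.centralBinom)) ~[atTop]
      fun n : ℕ => 4 ^ n / (n * (4 ^ n / √(π * n))) :=
    IsEquivalent.refl.div (IsEquivalent.refl.mul centralBinom_isEquivalent)
  refine hequiv.tendsto_nhds_iff.mpr (hlim.congr fun n => ?_)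
  rw [Real.sqrt_div' _ n.cast_nonneg, Real.sqrt_mul' _ n.cast_nonneg]
  rcases n.eq_zero_or_pos with rfl | hn
  · simp
  · field_simp
    rw [Real.sq_sqrt n.cast_nonneg]

theorem tendsto_centralBinom_div_centralBinom_add (k : ℕ) :
    Tendsto (fun n : ℕ => (n.centralBinom : ℝ) / (n + k).centralBinom) atTop
      (𝓝 (1 / 4 ^ k)) := by
  have hlim : Tendsto (fun n : ℕ => 1 / 4 ^ k * (√(n / (n + k)))⁻¹) atTop (𝓝 (1 / 4 ^ k)) := by
    simpa only [Real.sqrt_one, inv_one, mul_one] using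
      ((tendsto_natCast_div_add_atTop (k : ℝ)).sqrt.inv₀ (by simp)).const_mul (1 / 4 ^ k)
  have hequiv := centralBinom_isEquivalent.div
    (centralBinom_isEquivalent.comp_tendsto (tendsto_add_atTop_nat k))
  refine hequiv.tendsto_nhds_iff.mpr (hlim.congr' ?_)
  filter_upwards [eventually_gt_atTop 0] with n hn
  simp only [Function.comp_apply, Pi.div_apply, Nat.cast_add]
  rw [Real.sqrt_div n.cast_nonneg, Real.sqrt_mul Real.pi_nonneg, Real.sqrt_mul Real.pi_nonneg,
    pow_add]
  field_simp

theorem dyckEdgeCount_add_div {n : ℕ} (hn : 0 < n) (k : ℕ) :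
    dyckEdgeCount (n + k) k / (((n + k : ℕ) : ℝ) * (n + k).centralBinom) =
      catalan k * ((4 ^ n / (n * n.centralBinom) / 4 + 1 / 2) * (n / (n + k)) *
        (n.centralBinom / (n + k).centralBinom)) := by
  have hB : (n.centralBinom : ℝ) ≠ 0 := mod_cast n.centralBinom_ne_zero
  have hfour : (4 : ℝ) ^ (n - 1) = 4 ^ n / 4 := by
    rw [pow_sub₀ _ four_ne_zero hn, pow_one, div_eq_mul_inv]
  rw [dyckEdgeCount, Nat.add_sub_cancel, ← Nat.centralBinom_eq_two_mul_choose, hfour]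
  push_cast
  field_simp
  ring

theorem link_length_distribution_limit (k : ℕ) :
    Filter.Tendsto
      (fun N : ℕ => dyckEdgeCount N k / ((N : ℝ) * (Nat.choose (2 * N) N : ℝ)))
      Filter.atTop (nhds ((catalan k : ℝ) / (2 * 4 ^ k))) := by
  simp only [← Nat.centralBinom_eq_two_mul_choose]
  rw [← tendsto_add_atTop_iff_nat k]
  have hlim := ((((tendsto_four_pow_div_mul_centralBinom.div_const 4).add_const (1 / 2)).mul
    (tendsto_natCast_div_add_atTop (k : ℝ))).mul
      (tendsto_centralBinom_div_centralBinom_add k)).const_mul (catalan k : ℝ)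
  have hvalue : (catalan k : ℝ) * ((0 / 4 + 1 / 2) * 1 * (1 / 4 ^ k)) =
      catalan k / (2 * 4 ^ k) := by
    field_simp
    ring
  rw [hvalue] at hlim
  refine hlim.congr' ?_
  filter_upwards [eventually_gt_atTop 0] with n hn
  exact (dyckEdgeCount_add_div hn k).symm
end

section
/- Let p > −1 be real and k a natural number. Then C_k · Γ(2k+1+p)/Γ(2k+1) = Γ(p+1) · 4^k · Γ(k + (p+1)/2) · Γ(k + 1 + p/2) / (Γ((p+1)/2) · Γ(1 + p/2) · (k+1)! · k!), where C_k = binom(2k,k)/(k+1) is the k-th Catalan number and Γ is the real Gamma function. -/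
/-!
Up to the factor `2 ^ (1 - 2 * s) * √π`, Legendre's duplication formula identifies
`Γ s * Γ (s + 1 / 2)` with `Γ (2 * s)`. Comparing it at `s = (p + 1) / 2` and at `s + k`
cancels `√π` and leaves the ratio `4 ^ k`, while `Γ (2 * k + 1) = (2 * k)!` absorbs the
Catalan number.
-/

theorem catalan_mul_factorial_succ_mul_factorial (k : ℕ) :
    catalan k * (k + 1).factorial * k.factorial = (2 * k).factorial := by
  calc catalan k * (k + 1).factorial * k.factorial
      = (k + 1) * catalan k * k.factorial * k.factorial := by rw [Nat.factorial_succ]; ring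
    _ = (2 * k).choose k * k.factorial * k.factorial := by
      rw [succ_mul_catalan_eq_centralBinom, Nat.centralBinom_eq_two_mul_choose]
    _ = (2 * k).factorial := by
      rw [two_mul, Nat.add_choose_mul_factorial_mul_factorial]

theorem catalan_div_factorial_two_mul (K : Type*) [Field K] [CharZero K] (k : ℕ) :
    (catalan k : K) / (2 * k).factorial = 1 / ((k + 1).factorial * k.factorial) := by
  have factorial_ne_zero (n : ℕ) : (n.factorial : K) ≠ 0 :=
    Nat.cast_ne_zero.mpr n.factorial_ne_zero
  rw [div_eq_div_iff (factorial_ne_zero _)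
    (mul_ne_zero (factorial_ne_zero _) (factorial_ne_zero _)), one_mul, ← mul_assoc]
  exact_mod_cast catalan_mul_factorial_succ_mul_factorial k

theorem Gamma_two_mul_add_mul_Gamma_mul_Gamma_add_half (s w : ℂ) :
    Complex.Gamma (2 * (s + w)) * (Complex.Gamma s * Complex.Gamma (s + 1 / 2)) =
      2 ^ (2 * w) * Complex.Gamma (2 * s) *
        (Complex.Gamma (s + w) * Complex.Gamma (s + w + 1 / 2)) := by
  have two_cpow_split : (2 : ℂ) ^ (1 - 2 * s) = 2 ^ (2 * w) * 2 ^ (1 - 2 * (s + w)) := by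
    rw [← Complex.cpow_add _ _ two_ne_zero]
    ring_nf
  rw [Complex.Gamma_mul_Gamma_add_half, Complex.Gamma_mul_Gamma_add_half, two_cpow_split]
  ring

theorem Gamma_mul_Gamma_add_half_ne_zero {s : ℂ} (hs : ∀ m : ℕ, 2 * s ≠ -m) :
    Complex.Gamma s * Complex.Gamma (s + 1 / 2) ≠ 0 := by
  have sqrt_pi_ne_zero : (√Real.pi : ℂ) ≠ 0 :=
    Complex.ofReal_ne_zero.mpr (Real.sqrt_pos.mpr Real.pi_pos).ne'
  rw [Complex.Gamma_mul_Gamma_add_half]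
  exact mul_ne_zero (mul_ne_zero (Complex.Gamma_ne_zero hs)
    (Complex.cpow_ne_zero_iff.mpr (Or.inl two_ne_zero))) sqrt_pi_ne_zero

theorem Gamma_two_mul_natCast_add_one_add {p : ℂ} (hp : ∀ m : ℕ, p + 1 ≠ -m) (k : ℕ) :
    Complex.Gamma (2 * k + 1 + p) =
      4 ^ k * Complex.Gamma (p + 1) *
          (Complex.Gamma (k + (p + 1) / 2) * Complex.Gamma (k + 1 + p / 2)) /
        (Complex.Gamma ((p + 1) / 2) * Complex.Gamma (1 + p / 2)) := by
  have two_mul_half : 2 * ((p + 1) / 2) = p + 1 := mul_div_cancel₀ _ two_ne_zero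
  have half_add_half : (p + 1) / 2 + 1 / 2 = 1 + p / 2 := by ring
  have denom_ne_zero : Complex.Gamma ((p + 1) / 2) * Complex.Gamma (1 + p / 2) ≠ 0 := by
    rw [← half_add_half]
    exact Gamma_mul_Gamma_add_half_ne_zero (by rwa [two_mul_half])
  have two_cpow_eq_four_pow : (2 : ℂ) ^ (2 * (k : ℂ)) = 4 ^ k := by
    rw [Complex.cpow_ofNat_mul, Complex.cpow_natCast, pow_right_comm]
    norm_num
  have two_mul_shift : 2 * ((p + 1) / 2 + k) = 2 * k + 1 + p := by ring
  have shift_add_half : (p + 1) / 2 + k + 1 / 2 = k + 1 + p / 2 := by ring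
  have duplication := Gamma_two_mul_add_mul_Gamma_mul_Gamma_add_half ((p + 1) / 2) k
  rw [two_cpow_eq_four_pow, two_mul_half, half_add_half, two_mul_shift, shift_add_half,
    add_comm _ (k : ℂ)] at duplication
  exact eq_div_of_mul_eq denom_ne_zero duplication

theorem catalan_gamma_hypergeometric_coeff_general (p : ℂ) (hp : ∀ m : ℕ, p + 1 ≠ -m) (k : ℕ) :
    (catalan k : ℂ) * Complex.Gamma (2 * (k : ℂ) + 1 + p) / Complex.Gamma (2 * (k : ℂ) + 1) =
      Complex.Gamma (p + 1) * 4 ^ k * Complex.Gamma ((k : ℂ) + (p + 1) / 2) *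
        Complex.Gamma ((k : ℂ) + 1 + p / 2) /
      (Complex.Gamma ((p + 1) / 2) * Complex.Gamma (1 + p / 2) *
        ((k + 1).factorial : ℂ) * (k.factorial : ℂ)) := by
  have Gamma_eq_factorial : Complex.Gamma (2 * k + 1) = (2 * k).factorial := by
    exact_mod_cast Complex.Gamma_nat_eq_factorial (2 * k)
  calc (catalan k : ℂ) * Complex.Gamma (2 * k + 1 + p) / Complex.Gamma (2 * k + 1)
      = catalan k / (2 * k).factorial * Complex.Gamma (2 * k + 1 + p) := by
        rw [Gamma_eq_factorial, mul_div_right_comm]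
    _ = 1 / ((k + 1).factorial * k.factorial) *
          (4 ^ k * Complex.Gamma (p + 1) *
              (Complex.Gamma (k + (p + 1) / 2) * Complex.Gamma (k + 1 + p / 2)) /
            (Complex.Gamma ((p + 1) / 2) * Complex.Gamma (1 + p / 2))) := by
        rw [catalan_div_factorial_two_mul, Gamma_two_mul_natCast_add_one_add hp]
    _ = _ := by ring

theorem catalan_gamma_hypergeometric_coeff (p : ℝ) (hp : -1 < p) (k : ℕ) :
    (catalan k : ℝ) * Real.Gamma (2 * (k : ℝ) + 1 + p) / Real.Gamma (2 * (k : ℝ) + 1) =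
      Real.Gamma (p + 1) * 4 ^ k * Real.Gamma ((k : ℝ) + (p + 1) / 2) *
        Real.Gamma ((k : ℝ) + 1 + p / 2) /
      (Real.Gamma ((p + 1) / 2) * Real.Gamma (1 + p / 2) *
        ((k + 1).factorial : ℝ) * (k.factorial : ℝ)) := by
  have not_pole (m : ℕ) : p + 1 ≠ -m := by linarith [m.cast_nonneg (α := ℝ)]
  apply Complex.ofReal_injective
  push_cast [← Complex.Gamma_ofReal]
  exact catalan_gamma_hypergeometric_coeff_general p (by exact_mod_cast not_pole) k
end

section
/- Let 1/2 < p < 1 be real. Define, for N ≥ 1, E_N(p) = B_N^{−1} · Σ_{k=0}^{N−1} v_{N,k} · Γ(2k+1+p)/(2k)!, where B_N = binom(2N,N), C_k = binom(2k,k)/(k+1), and v_{N,k} = C_k · (4^{N−k−1} + ((N−k)/2) · B_{N−k}). Then the limit as N → ∞ of E_N(p) / N^{1/2 + p} equals 2^p · Γ(p − 1/2) / (4 · Γ(p+1)). -/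
/-- Average cost of the Dyck matching in the exponential-spacings model. -/
noncomputable def dyckCostES (p : ℝ) (N : ℕ) : ℝ :=
  ((Nat.choose (2 * N) N : ℝ))⁻¹ *
    ∑ k ∈ Finset.range N,
      dyckEdgeCount N k * Real.Gamma (2 * (k : ℝ) + 1 + p) / ((2 * k).factorial : ℝ)

/-!
After division by `4 ^ N`, the sum defining `E_N(p)` is a convolution of two sequences
asymptotic to constant multiples of `k ^ (p - 3 / 2)` and `m ^ (1 / 2)`, and it is divided by
`B_N / 4 ^ N ~ (π N) ^ (-1 / 2)`.
For `s, t > -1`, the convolution of sequences asymptotic to `c n ^ s` and `d n ^ t` is asymptotic to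
`c d Β(s + 1, t + 1) n ^ (s + t + 1)`. Indeed no bounded range of indices contributes to leading
order, so each sequence may be replaced by any other with the same asymptotics. The coefficients
`Ring.multichoose α n` of `(1 - x) ^ (-α)` are asymptotic to `n ^ (α - 1) / Γ(α)`, and for them the
convolution is exact: `(1 - x) ^ (-α) (1 - x) ^ (-β) = (1 - x) ^ (-(α + β))`.
-/

open Asymptotics Filter Finset Topology
open scoped Nat

/-- The Cauchy product (additive convolution) of two sequences: the coefficients of the product of
the power series with coefficients `u` and `v`. -/
def cauchyProduct {R : Type*} [NonUnitalNonAssocSemiring R] (u v : ℕ → R) (n : ℕ) : R :=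
  ∑ ij ∈ antidiagonal n, u ij.1 * v ij.2

theorem cauchyProduct_eq_sum_range {R : Type*} [NonUnitalNonAssocSemiring R] (u v : ℕ → R)
    (n : ℕ) : cauchyProduct u v n = ∑ k ∈ range (n + 1), u k * v (n - k) :=
  Nat.sum_antidiagonal_eq_sum_range_succ (fun i j => u i * v j) n

theorem cauchyProduct_comm {R : Type*} [NonUnitalNonAssocCommSemiring R] (u v : ℕ → R) :
    cauchyProduct u v = cauchyProduct v u := by
  ext n
  simp only [cauchyProduct, mul_comm (u _)]
  exact Nat.sum_antidiagonal_swap (f := fun ij => v ij.1 * u ij.2)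

theorem cauchyProduct_le_sum_range_add {R : Type*} [CommRing R] [LinearOrder R]
    [IsStrictOrderedRing R] {a b x : ℕ → R} {δ : R} {K : ℕ} (ha : ∀ n, 0 ≤ a n)
    (hb : ∀ n, 0 ≤ b n) (hx : ∀ n, 0 ≤ x n) (hδ : 0 ≤ δ) (hxa : ∀ k ≥ K, x k ≤ δ * a k) (n : ℕ) :
    cauchyProduct x b n ≤ ∑ k ∈ range K, x k * b (n - k) + δ * cauchyProduct a b n := by
  have hsplit (k : ℕ) : x k ≤ (if k < K then x k else 0) + δ * a k := by
    split_ifs with hk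
    · linarith [mul_nonneg hδ (ha k)]
    · linarith [hxa k (not_lt.mp hk)]
  simp only [cauchyProduct_eq_sum_range]
  calc ∑ k ∈ range (n + 1), x k * b (n - k)
      ≤ ∑ k ∈ range (n + 1), ((if k < K then x k else 0) + δ * a k) * b (n - k) :=
        sum_le_sum fun k _ => mul_le_mul_of_nonneg_right (hsplit k) (hb _)
    _ = ∑ k ∈ range (n + 1) with k < K, x k * b (n - k)
          + δ * ∑ k ∈ range (n + 1), a k * b (n - k) := by
        simp only [add_mul, sum_add_distrib, ite_mul, zero_mul, sum_filter, mul_sum, mul_assoc]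
    _ ≤ _ := by
        gcongr
        · exact fun k _ _ => mul_nonneg (hx k) (hb _)
        · exact fun k hk => mem_range.mpr (mem_filter.mp hk).2

theorem cauchyProduct_isLittleO {R : Type*} [SeminormedRing R] {u v : ℕ → R} {a b : ℕ → ℝ}
    (ha : ∀ n, 0 ≤ a n) (hb : ∀ n, 0 < b n) (hu : u =o[atTop] a) (hv : v =O[atTop] b)
    (hreg : ∀ k, (fun n => b (n - k)) =o[atTop] cauchyProduct a b) :
    cauchyProduct u v =o[atTop] cauchyProduct a b := by
  obtain ⟨C, hC, hvC⟩ := bound_of_isBigO_nat_atTop hv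
  refine isLittleO_iff.mpr fun ε hε => ?_
  set δ := ε / (2 * C) with hδ
  have hδ_pos : 0 < δ := by positivity
  obtain ⟨K, hK⟩ := eventually_atTop.mp (isLittleO_iff.mp hu hδ_pos)
  have hhead : (fun n => ∑ k ∈ range K, ‖u k‖ * b (n - k)) =o[atTop] cauchyProduct a b := by
    simpa only [← sum_fn] using
      IsLittleO.sum (s := range K) fun k _ => (hreg k).const_mul_left ‖u k‖
  filter_upwards [isLittleO_iff.mp hhead hδ_pos] with n hn
  calc ‖cauchyProduct u v n‖
      ≤ ∑ ij ∈ antidiagonal n, ‖u ij.1‖ * (C * b ij.2) := by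
        refine norm_sum_le_of_le _ fun ij _ => (norm_mul_le _ _).trans ?_
        gcongr
        exact (hvC (hb _).ne').trans_eq (by rw [Real.norm_of_nonneg (hb _).le])
    _ = C * cauchyProduct (fun k => ‖u k‖) b n := by
        simp only [cauchyProduct, mul_sum, mul_left_comm]
    _ ≤ C * (∑ k ∈ range K, ‖u k‖ * b (n - k) + δ * cauchyProduct a b n) := by
        gcongr
        exact cauchyProduct_le_sum_range_add ha (fun k => (hb k).le) (fun k => norm_nonneg _)
          hδ_pos.le (fun k hk => (hK k hk).trans_eq (by rw [Real.norm_of_nonneg (ha k)])) n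
    _ ≤ C * (δ * ‖cauchyProduct a b n‖ + δ * ‖cauchyProduct a b n‖) := by
        gcongr
        · exact (le_abs_self _).trans hn
        · exact le_abs_self _
    _ = ε * ‖cauchyProduct a b n‖ := by
        rw [hδ]
        field_simp
        ring

theorem tendsto_cauchyProduct_div {a b u v : ℕ → ℝ} {c d : ℝ} (ha : ∀ n, 0 < a n)
    (hb : ∀ n, 0 < b n) (hu : Tendsto (fun n => u n / a n) atTop (𝓝 c))
    (hv : Tendsto (fun n => v n / b n) atTop (𝓝 d))
    (hreg_a : ∀ k, (fun n => a (n - k)) =o[atTop] cauchyProduct a b)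
    (hreg_b : ∀ k, (fun n => b (n - k)) =o[atTop] cauchyProduct a b) :
    Tendsto (fun n => cauchyProduct u v n / cauchyProduct a b n) atTop (𝓝 (c * d)) := by
  have hab (n : ℕ) : cauchyProduct a b n ≠ 0 :=
    (sum_pos (fun ij _ => mul_pos (ha _) (hb _)) ⟨(0, n), by simp⟩).ne'
  have hdecomp (n : ℕ) : cauchyProduct u v n / cauchyProduct a b n =
      cauchyProduct (u - c • a) v n / cauchyProduct a b n
        + c * (cauchyProduct a (v - d • b) n / cauchyProduct a b n) + c * d := by
    rw [← mul_div_assoc, ← add_div, div_add' _ _ _ (hab n)]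
    simp only [cauchyProduct, mul_sum, ← sum_add_distrib]
    congr! 2
    simp only [Pi.sub_apply, Pi.smul_apply, smul_eq_mul]
    ring
  have sub_smul_isLittleO {x y : ℕ → ℝ} {l : ℝ} (hy : ∀ n, 0 < y n)
      (h : Tendsto (fun n => x n / y n) atTop (𝓝 l)) : (x - l • y) =o[atTop] y := by
    refine (isLittleO_iff_tendsto fun n hn => absurd hn (hy n).ne').mpr ?_
    simpa [sub_div, (hy _).ne'] using h.sub_const l
  have hleft : cauchyProduct (u - c • a) v =o[atTop] cauchyProduct a b :=
    cauchyProduct_isLittleO (fun n => (ha n).le) hb (sub_smul_isLittleO ha hu)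
      (isBigO_of_div_tendsto_nhds (.of_forall fun n hn => absurd hn (hb n).ne') d hv) hreg_b
  have hright : cauchyProduct a (v - d • b) =o[atTop] cauchyProduct a b := by
    rw [cauchyProduct_comm a b] at hreg_a ⊢
    rw [cauchyProduct_comm a]
    exact cauchyProduct_isLittleO (fun n => (hb n).le) ha (sub_smul_isLittleO hb hv)
      (isBigO_refl a atTop) hreg_a
  simpa [hdecomp] using (hleft.tendsto_div_nhds_zero.add
    (hright.tendsto_div_nhds_zero.const_mul c)).add_const (c * d)

/-- `HasPowerAsymptotics u s c` says that `u n = (c + o(1)) * n ^ s`. Unlike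
`u ~[atTop] fun n => c * n ^ s`, it only asserts `u n = o(n ^ s)` for `c = 0`. -/
def HasPowerAsymptotics (u : ℕ → ℝ) (s c : ℝ) : Prop :=
  Tendsto (fun n : ℕ => u n / (n : ℝ) ^ s) atTop (𝓝 c)

namespace HasPowerAsymptotics

variable {u v : ℕ → ℝ} {s t c d : ℝ}

theorem natCast : HasPowerAsymptotics (fun n => n) 1 1 := by
  refine tendsto_const_nhds.congr' ?_
  filter_upwards [eventually_ne_atTop 0] with n hn
  simp [hn]

theorem const (c : ℝ) : HasPowerAsymptotics (fun _ => c) 0 c := by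
  simp [HasPowerAsymptotics]

theorem mul (hu : HasPowerAsymptotics u s c) (hv : HasPowerAsymptotics v t d) :
    HasPowerAsymptotics (fun n => u n * v n) (s + t) (c * d) := by
  refine (Tendsto.mul hu hv).congr' ?_
  filter_upwards [eventually_gt_atTop 0] with n hn
  rw [Real.rpow_add (by positivity), div_mul_div_comm]

theorem div (hu : HasPowerAsymptotics u s c) (hv : HasPowerAsymptotics v t d) (hd : d ≠ 0) :
    HasPowerAsymptotics (fun n => u n / v n) (s - t) (c / d) := by
  refine (Tendsto.div hu hv hd).congr' ?_
  filter_upwards [eventually_gt_atTop 0] with n hn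
  rw [Pi.div_apply, Real.rpow_sub (by positivity), div_div_div_comm]

theorem const_mul (a : ℝ) (hu : HasPowerAsymptotics u s c) :
    HasPowerAsymptotics (fun n => a * u n) s (a * c) := by
  simpa using (const a).mul hu

theorem of_lt (hu : HasPowerAsymptotics u s c) (hst : s < t) : HasPowerAsymptotics u t 0 := by
  have hpow : Tendsto (fun n : ℕ => (n : ℝ) ^ (-(t - s))) atTop (𝓝 0) :=
    (tendsto_rpow_neg_atTop (sub_pos.mpr hst)).comp tendsto_natCast_atTop_atTop
  rw [HasPowerAsymptotics, ← mul_zero c]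
  refine (Tendsto.mul hu hpow).congr' ?_
  filter_upwards [eventually_gt_atTop 0] with n hn
  have hn_pos : (0 : ℝ) < n := by exact_mod_cast hn
  rw [neg_sub, Real.rpow_sub hn_pos, div_mul_div_cancel₀ (by positivity)]

theorem add_of_lt (hu : HasPowerAsymptotics u s c) (hv : HasPowerAsymptotics v t d)
    (hst : s < t) : HasPowerAsymptotics (fun n => u n + v n) t d := by
  simpa [HasPowerAsymptotics, add_div] using Tendsto.add (hu.of_lt hst) hv

theorem isLittleO (hu : HasPowerAsymptotics u s c) (hv : HasPowerAsymptotics v t d)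
    (hst : s < t) (hd : d ≠ 0) : u =o[atTop] v := by
  have hv_ne : ∀ᶠ n in atTop, v n ≠ 0 := by
    filter_upwards [Tendsto.eventually_ne hv hd] with n hn hvn
    simp [hvn] at hn
  refine (isLittleO_iff_tendsto' (hv_ne.mono fun n hn hvn => absurd hvn hn)).mpr ?_
  simpa [HasPowerAsymptotics] using (hu.of_lt hst).div hv hd

theorem comp_add_iff (k : ℕ) :
    HasPowerAsymptotics (fun n => u (n + k)) s c ↔ HasPowerAsymptotics u s c := by
  have hshift : (fun n : ℕ => ((n + k : ℕ) : ℝ)) ~[atTop] fun n => (n : ℝ) := by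
    refine (isEquivalent_iff_tendsto_one ?_).mpr ?_
    · filter_upwards [eventually_ne_atTop 0] with n hn
      exact_mod_cast hn
    · simpa [HasPowerAsymptotics, Pi.div_def, add_comm] using (const k).add_of_lt natCast one_pos
  have hquot := (IsEquivalent.refl (u := fun n => u (n + k))).div
    (hshift.rpow (fun n => n.cast_nonneg) (r := s))
  exact (hquot.symm.tendsto_nhds_iff).trans
    (tendsto_add_atTop_iff_nat (f := fun n => u n / (n : ℝ) ^ s) k)

theorem comp_sub (hu : HasPowerAsymptotics u s c) (k : ℕ) :
    HasPowerAsymptotics (fun n => u (n - k)) s c := by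
  simpa [← comp_add_iff (u := fun n => u (n - k)) k] using hu

theorem comp_mul_left (hu : HasPowerAsymptotics u s c) {m : ℕ} (hm : 0 < m) :
    HasPowerAsymptotics (fun n => u (m * n)) s (m ^ s * c) := by
  refine ((hu.comp (tendsto_id.const_mul_atTop' hm)).const_mul _).congr fun n => ?_
  have : (m : ℝ) ^ s ≠ 0 := by positivity
  simp [Real.mul_rpow]
  field_simp

end HasPowerAsymptotics

theorem factorial_mul_multichoose {R : Type*} [CommRing R] [BinomialRing R] (a : R) (n : ℕ) :
    (n ! : R) * Ring.multichoose a n = (ascPochhammer R n).eval a := by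
  rw [← nsmul_eq_mul, Ring.factorial_nsmul_multichoose_eq_ascPochhammer,
    Polynomial.ascPochhammer_smeval_eq_eval]

theorem succ_mul_multichoose_succ {R : Type*} [CommRing R] [BinomialRing R] (a : R) (n : ℕ) :
    (n + 1) * Ring.multichoose a (n + 1) = (a + n) * Ring.multichoose a n := by
  have hsucc := factorial_mul_multichoose a (n + 1)
  rw [ascPochhammer_succ_eval, ← factorial_mul_multichoose a n, Nat.factorial_succ] at hsucc
  push_cast at hsucc
  have := BinomialRing.toIsAddTorsionFree (R := R)
  refine nsmul_right_injective n.factorial_ne_zero ?_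
  simp only [nsmul_eq_mul]
  linear_combination hsucc

theorem multichoose_pos {R : Type*} [CommRing R] [LinearOrder R] [IsStrictOrderedRing R]
    [BinomialRing R] {a : R} (ha : 0 < a) (n : ℕ) : 0 < Ring.multichoose a n := by
  induction n with
  | zero => simp
  | succ n ih =>
    refine pos_of_mul_pos_right ?_ (n.cast_add_one_pos (α := R)).le
    rw [succ_mul_multichoose_succ]
    positivity

theorem cauchyProduct_multichoose {R : Type*} [CommRing R] [BinomialRing R] (r s : R) :
    cauchyProduct (Ring.multichoose r) (Ring.multichoose s) = Ring.multichoose (r + s) := by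
  ext n
  refine MulAction.injective (Int.negOnePow n) ?_
  dsimp only
  rw [← Ring.choose_neg', neg_add, Ring.add_choose_eq n (Commute.all _ _), cauchyProduct, smul_sum]
  refine sum_congr rfl fun ij hij => ?_
  rw [Ring.choose_neg', Ring.choose_neg', smul_mul_smul_comm, ← Int.negOnePow_add, ← Nat.cast_add,
    mem_antidiagonal.mp hij]

theorem prod_range_add_eq_factorial_mul_multichoose {R : Type*} [CommRing R] [BinomialRing R]
    (a : R) (n : ℕ) :
    ∏ j ∈ range n, (a + j) = n ! * Ring.multichoose a n := by
  rw [factorial_mul_multichoose]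
  induction n with
  | zero => simp
  | succ n ih => rw [prod_range_succ, ih, ascPochhammer_succ_eval]

theorem Gamma_natCast_add {a : ℝ} (ha : ∀ m : ℕ, a ≠ -m) (n : ℕ) :
    Real.Gamma (n + a) = n ! * Real.Gamma a * Ring.multichoose a n := by
  induction n with
  | zero => simp
  | succ n ih =>
    have hna : (n : ℝ) + a ≠ 0 := fun h => ha n (by linarith)
    rw [Nat.cast_succ, add_right_comm, Real.Gamma_add_one hna, ih, Nat.factorial_succ]
    push_cast
    linear_combination -(n ! * Real.Gamma a) * succ_mul_multichoose_succ a n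

theorem hasPowerAsymptotics_multichoose {a : ℝ} (ha : ∀ m : ℕ, a ≠ -m) :
    HasPowerAsymptotics (Ring.multichoose a) (a - 1) (Real.Gamma a)⁻¹ := by
  have hlim := ((Real.GammaSeq_tendsto_Gamma a).inv₀ (Real.Gamma_ne_zero ha)).mul
    (tendsto_natCast_div_add_atTop a)
  rw [mul_one] at hlim
  refine hlim.congr' ?_
  filter_upwards [eventually_gt_atTop 0] with n hn
  have hna : (n : ℝ) + a ≠ 0 := fun h => ha n (by linarith)
  have hn_pos : (0 : ℝ) < n := by exact_mod_cast hn
  rw [Real.GammaSeq, prod_range_succ, prod_range_add_eq_factorial_mul_multichoose,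
    Real.rpow_sub_one hn_pos.ne', add_comm a]
  field_simp

theorem hasPowerAsymptotics_Gamma_div_factorial {a : ℝ} (ha : ∀ m : ℕ, a ≠ -m) :
    HasPowerAsymptotics (fun n => Real.Gamma (n + a) / n !) (a - 1) 1 := by
  have hG := Real.Gamma_ne_zero ha
  have h := (hasPowerAsymptotics_multichoose ha).const_mul (Real.Gamma a)
  rw [mul_inv_cancel₀ hG] at h
  convert h using 2 with n
  rw [Gamma_natCast_add ha]
  field_simp

theorem hasPowerAsymptotics_cauchyProduct {u v : ℕ → ℝ} {s t c d : ℝ} (hs : -1 < s) (ht : -1 < t)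
    (hu : HasPowerAsymptotics u s c) (hv : HasPowerAsymptotics v t d) :
    HasPowerAsymptotics (cauchyProduct u v) (s + t + 1)
      (c * d * (Real.Gamma (s + 1) * Real.Gamma (t + 1) / Real.Gamma (s + t + 2))) := by
  have hmc {r : ℝ} (hr : 0 < r + 1) :
      HasPowerAsymptotics (Ring.multichoose (r + 1)) r (Real.Gamma (r + 1))⁻¹ := by
    simpa using hasPowerAsymptotics_multichoose (a := r + 1)
      fun m => by linarith [m.cast_nonneg (α := ℝ)]
  have hΓ {r : ℝ} (hr : 0 < r + 1) : (Real.Gamma (r + 1))⁻¹ ≠ 0 :=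
    inv_ne_zero (Real.Gamma_pos_of_pos hr).ne'
  have hs_pos : 0 < s + 1 := by linarith
  have ht_pos : 0 < t + 1 := by linarith
  have hst_pos : 0 < s + t + 1 + 1 := by linarith
  have hconv : cauchyProduct (Ring.multichoose (s + 1)) (Ring.multichoose (t + 1)) =
      Ring.multichoose (s + t + 1 + 1) := by
    rw [cauchyProduct_multichoose]
    ring_nf
  have hratio : HasPowerAsymptotics
      (fun n => cauchyProduct u v n / Ring.multichoose (s + t + 1 + 1) n) 0
      (c / (Real.Gamma (s + 1))⁻¹ * (d / (Real.Gamma (t + 1))⁻¹)) := by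
    simp only [HasPowerAsymptotics, Real.rpow_zero, div_one]
    rw [← hconv]
    refine tendsto_cauchyProduct_div (multichoose_pos hs_pos) (multichoose_pos ht_pos) ?_ ?_ ?_ ?_
    · simpa [HasPowerAsymptotics] using hu.div (hmc hs_pos) (hΓ hs_pos)
    · simpa [HasPowerAsymptotics] using hv.div (hmc ht_pos) (hΓ ht_pos)
    · rw [hconv]
      exact fun k => ((hmc hs_pos).comp_sub k).isLittleO (hmc hst_pos) (by linarith) (hΓ hst_pos)
    · rw [hconv]
      exact fun k => ((hmc ht_pos).comp_sub k).isLittleO (hmc hst_pos) (by linarith) (hΓ hst_pos)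
  convert hratio.mul (hmc hst_pos) using 1
  · ext n
    rw [div_mul_cancel₀ _ (multichoose_pos hst_pos n).ne']
  · ring
  · simp only [div_eq_mul_inv, inv_inv, add_assoc, one_add_one_eq_two]
    ring

theorem centralBinom_eq_four_pow_mul_multichoose (n : ℕ) :
    (n.centralBinom : ℝ) = 4 ^ n * Ring.multichoose (1 / 2 : ℝ) n := by
  induction n with
  | zero => simp
  | succ n ih =>
    have hrec : ((n : ℝ) + 1) * (n + 1).centralBinom = 2 * (2 * n + 1) * n.centralBinom := by
      exact_mod_cast n.succ_mul_centralBinom_succ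
    refine mul_left_cancel₀ n.cast_add_one_ne_zero ?_
    rw [hrec, ih]
    linear_combination (-4 ^ (n + 1)) * succ_mul_multichoose_succ (1 / 2 : ℝ) n

theorem hasPowerAsymptotics_centralBinom :
    HasPowerAsymptotics (fun n => n.centralBinom / 4 ^ n) (-1 / 2) (√Real.pi)⁻¹ := by
  have h := hasPowerAsymptotics_multichoose (a := 1 / 2)
    fun m => by linarith [m.cast_nonneg (α := ℝ)]
  rw [Real.Gamma_one_half_eq] at h
  convert h using 2 with n
  · rw [centralBinom_eq_four_pow_mul_multichoose, mul_div_cancel_left₀ _ (by positivity)]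
  · norm_num

theorem hasPowerAsymptotics_catalan :
    HasPowerAsymptotics (fun n => catalan n / 4 ^ n) (-3 / 2) (√Real.pi)⁻¹ := by
  have h := hasPowerAsymptotics_centralBinom.div
    ((HasPowerAsymptotics.comp_add_iff 1).mpr HasPowerAsymptotics.natCast) one_ne_zero
  convert h using 2 with n
  · rw [← succ_mul_catalan_eq_centralBinom]
    push_cast
    field_simp
  · norm_num
  · norm_num

/-- The factors of the `k`-th summand of `dyckCostES` that depend on `k` alone: `C_k / 4 ^ k`
times the expected `p`-th power of the length of an edge spanning `2 * k + 1` spacings. -/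
noncomputable def catalanGammaWeight (p : ℝ) (k : ℕ) : ℝ :=
  catalan k / 4 ^ k * (Real.Gamma ((2 * k : ℕ) + (1 + p)) / (2 * k) !)

/-- The second factor `4 ^ m + (m + 1) / 2 * B_{m + 1}` of `v N k`, where `m = N - k - 1`, divided
by `4 ^ m` and expressed through the normalized central binomials `B_n / 4 ^ n`. -/
noncomputable def edgeMultiplicity (m : ℕ) : ℝ :=
  1 + 2 * ((m + 1 : ℕ) * ((m + 1).centralBinom / 4 ^ (m + 1)))

theorem hasPowerAsymptotics_catalanGammaWeight {p : ℝ} (hp : ∀ m : ℕ, 1 + p ≠ -m) :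
    HasPowerAsymptotics (catalanGammaWeight p) (p - 3 / 2) (2 ^ p / √Real.pi) := by
  have h := hasPowerAsymptotics_catalan.mul
    ((hasPowerAsymptotics_Gamma_div_factorial hp).comp_mul_left two_pos)
  convert h using 1
  · rfl
  · ring
  · rw [add_sub_cancel_left]
    push_cast
    ring

theorem hasPowerAsymptotics_edgeMultiplicity :
    HasPowerAsymptotics edgeMultiplicity (1 / 2) (2 / √Real.pi) := by
  have h := (HasPowerAsymptotics.const 1).add_of_lt
    (((HasPowerAsymptotics.comp_add_iff 1).mpr
      (HasPowerAsymptotics.natCast.mul hasPowerAsymptotics_centralBinom)).const_mul 2)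
    (by norm_num)
  convert h using 1
  · rfl
  · norm_num
  · ring

theorem dyckCostES_succ (p : ℝ) (n : ℕ) :
    dyckCostES p (n + 1) =
      1 / 4 * (cauchyProduct (catalanGammaWeight p) edgeMultiplicity n /
        ((n + 1).centralBinom / 4 ^ (n + 1))) := by
  have hterm (k : ℕ) (hk : k ∈ range (n + 1)) :
      dyckEdgeCount (n + 1) k * Real.Gamma (2 * k + 1 + p) / (2 * k) ! =
        4 ^ n * (catalanGammaWeight p k * edgeMultiplicity (n - k)) := by
    obtain ⟨m, rfl⟩ := Nat.exists_eq_add_of_le (mem_range_succ_iff.mp hk)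
    rw [dyckEdgeCount, catalanGammaWeight, edgeMultiplicity, Nat.centralBinom,
      show k + m + 1 - k = m + 1 by omega, Nat.add_sub_cancel_left, Nat.add_sub_cancel]
    push_cast
    rw [add_assoc (2 * (k : ℝ)), pow_add, pow_succ]
    field_simp
    ring
  rw [dyckCostES, sum_congr rfl hterm, ← mul_sum, ← cauchyProduct_eq_sum_range, Nat.centralBinom,
    pow_succ]
  field_simp

theorem Gamma_three_half_eq : Real.Gamma (3 / 2) = √Real.pi / 2 := by
  rw [show (3 / 2 : ℝ) = 1 / 2 + 1 by norm_num, Real.Gamma_add_one (by norm_num),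
    Real.Gamma_one_half_eq]
  ring

theorem dyckCostES_leading_high_p_general (p : ℝ) (hp : 1 / 2 < p) :
    Tendsto (fun N : ℕ => dyckCostES p N / (N : ℝ) ^ (1 / 2 + p)) atTop
      (𝓝 (2 ^ p * Real.Gamma (p - 1 / 2) / (4 * Real.Gamma (p + 1)))) := by
  have hweight : HasPowerAsymptotics (catalanGammaWeight p) (p - 3 / 2) (2 ^ p / √Real.pi) :=
    hasPowerAsymptotics_catalanGammaWeight fun m => by linarith [m.cast_nonneg (α := ℝ)]
  have hsum := hasPowerAsymptotics_cauchyProduct (by linarith) (by norm_num) hweight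
    hasPowerAsymptotics_edgeMultiplicity
  have hquot := (hsum.div ((HasPowerAsymptotics.comp_add_iff 1).mpr
    hasPowerAsymptotics_centralBinom) (by positivity)).const_mul (1 / 4)
  simp only [← dyckCostES_succ, HasPowerAsymptotics.comp_add_iff 1] at hquot
  rw [show p - 3 / 2 + 1 = p - 1 / 2 by ring, show (1 / 2 : ℝ) + 1 = 3 / 2 by norm_num,
    show p - 3 / 2 + 1 / 2 + 2 = p + 1 by ring, Gamma_three_half_eq] at hquot
  change HasPowerAsymptotics (dyckCostES p) _ _
  convert hquot using 1
  · ring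
  · field_simp

theorem dyckCostES_leading_high_p (p : ℝ) (hp0 : 1 / 2 < p) (hp1 : p < 1) :
    Filter.Tendsto
      (fun N : ℕ => dyckCostES p N / (N : ℝ) ^ (1 / 2 + p))
      Filter.atTop
      (nhds ((2 : ℝ) ^ p * Real.Gamma (p - 1 / 2) / (4 * Real.Gamma (p + 1)))) :=
  dyckCostES_leading_high_p_general p hp0
end

section
/- Let 0 < p < 1/2 be real. Define, for N ≥ 1, E_N(p) = B_N^{−1} · Σ_{k=0}^{N−1} v_{N,k} · Γ(2k+1+p)/(2k)!, where B_N = binom(2N,N), C_k = binom(2k,k)/(k+1), and v_{N,k} = C_k · (4^{N−k−1} + ((N−k)/2) · B_{N−k}). Then the limit as N → ∞ of E_N(p) / N equals Γ(1/2 − p) · Γ(p+1) / (2^p · √π · Γ(2 − p)). -/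
/-!
Write `w n = n B_n / 4 ^ n`. Dividing `v_{N,k}` by `N B_N` turns the cost into
`E_N(p) / N = ∑_{k < N} (w (N - k) / w N + 1 / (2 w N)) c_k`, where
`c_k = C_k Γ(2k + 1 + p) / (2 ⬝ 4 ^ k (2k)!)` does not depend on `N`. Since `w` increases to
infinity and `w (n + 1) / w n → 1`, dominated convergence gives `E_N(p) / N → ∑ c_k` as soon as
this series converges. By the duplication formula `c_k` is, up to a constant factor, the `k`-th term
of the hypergeometric series `₂F₁((1 + p) / 2, 1 + p / 2; 2; 1)`, which Gauss's theorem evaluates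
for `p < 1 / 2`; a second use of the duplication formula simplifies the value.
-/

open Filter Finset MeasureTheory Real Topology

section BetaIntegral

variable {u v : ℝ}

lemma ofReal_rpow_mul_one_sub_rpow {x : ℝ} (hx : x ∈ Set.Icc (0 : ℝ) 1) :
    ((x ^ (u - 1) * (1 - x) ^ (v - 1) : ℝ) : ℂ) =
      (x : ℂ) ^ ((u : ℂ) - 1) * (1 - (x : ℂ)) ^ ((v : ℂ) - 1) := by
  push_cast [Complex.ofReal_cpow hx.1, Complex.ofReal_cpow (sub_nonneg.2 hx.2)]
  rfl

lemma integrableOn_rpow_mul_one_sub_rpow (hu : 0 < u) (hv : 0 < v) :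
    IntegrableOn (fun x : ℝ ↦ x ^ (u - 1) * (1 - x) ^ (v - 1)) (Set.Ioo 0 1) := by
  have h := Complex.betaIntegral_convergent (u := u) (v := v) (by simpa) (by simpa)
  rw [intervalIntegrable_iff_integrableOn_Ioo_of_le zero_le_one] at h
  refine IntegrableOn.congr_fun h.re (fun x hx ↦ ?_) measurableSet_Ioo
  simp only [← ofReal_rpow_mul_one_sub_rpow (Set.Ioo_subset_Icc_self hx), RCLike.re_to_complex,
    Complex.ofReal_re]

lemma integral_rpow_mul_one_sub_rpow (hu : 0 < u) (hv : 0 < v) :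
    ∫ x in Set.Ioo (0 : ℝ) 1, x ^ (u - 1) * (1 - x) ^ (v - 1) = ProbabilityTheory.beta u v := by
  rw [ProbabilityTheory.beta_eq_betaIntegralReal u v hu hv, Complex.betaIntegral,
    intervalIntegral.integral_of_le zero_le_one, ← setIntegral_congr_fun measurableSet_Ioc
      fun x hx ↦ ofReal_rpow_mul_one_sub_rpow (Set.Ioc_subset_Icc_self hx),
    integral_complex_ofReal, Complex.ofReal_re, integral_Ioc_eq_integral_Ioo]

end BetaIntegral

section Gauss

lemma Gamma_add_natCast_eq_mul_ascPochhammer {a : ℝ} (ha : ∀ m : ℕ, a ≠ -m) (n : ℕ) :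
    Gamma (a + n) = Gamma a * (ascPochhammer ℝ n).eval a := by
  induction n with
  | zero => simp
  | succ n ih =>
    have h_ne : a + n ≠ 0 := fun h ↦ ha n (eq_neg_of_add_eq_zero_left h)
    rw [ascPochhammer_succ_eval, ← mul_assoc, ← ih, Nat.cast_succ, ← add_assoc,
      Gamma_add_one h_ne, mul_comm]

lemma hasSum_Gamma_add_div_factorial_mul_pow {a t : ℝ} (ha : ∀ m : ℕ, a ≠ -m) (ht : |t| < 1) :
    HasSum (fun n : ℕ ↦ Gamma (a + n) / n.factorial * t ^ n) (Gamma a * (1 - t) ^ (-a)) := by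
  have h_coeff (n : ℕ) : Gamma (a + n) / n.factorial = Gamma a * Ring.choose (a + n - 1) n := by
    have h := Ring.factorial_nsmul_multichoose_eq_ascPochhammer a n
    rw [Polynomial.ascPochhammer_smeval_eq_eval, nsmul_eq_mul, Ring.multichoose_eq] at h
    rw [Gamma_add_natCast_eq_mul_ascPochhammer ha, ← h]
    field_simp
  have h_series := (one_div_one_sub_rpow_hasFPowerSeriesOnBall_zero a).hasSum (y := t)
    (by simpa [enorm_eq_ofReal_abs] using ht)
  simp only [FormalMultilinearSeries.ofScalars_apply_eq, zero_add, smul_eq_mul, one_div,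
    ← rpow_neg (sub_nonneg.2 (abs_lt.1 ht).2.le)] at h_series
  simpa only [h_coeff, mul_assoc] using h_series.mul_left (Gamma a)

lemma hasSum_integral_of_nonneg {α ι : Type*} [MeasurableSpace α] [Countable ι] {μ : Measure α}
    {F : ι → α → ℝ} {f : α → ℝ} (hF_meas : ∀ i, AEStronglyMeasurable (F i) μ)
    (hF_nonneg : ∀ i, 0 ≤ᵐ[μ] F i) (hF_sum : ∀ᵐ x ∂μ, HasSum (F · x) (f x))
    (hf : Integrable f μ) : HasSum (fun i ↦ ∫ x, F i x ∂μ) (∫ x, f x ∂μ) := by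
  refine hasSum_integral_of_dominated_convergence F hF_meas (fun i ↦ ?_)
    (hF_sum.mono fun x hx ↦ hx.summable) (hf.congr (hF_sum.mono fun x hx ↦ hx.tsum_eq.symm)) hF_sum
  filter_upwards [hF_nonneg i] with x hx using (norm_of_nonneg hx).le

variable {a b c : ℝ}

lemma hasSum_integral_Gamma_add_div_factorial (ha : 0 < a) (hb : 0 < b) (habc : a + b < c) :
    HasSum (fun k : ℕ ↦ ∫ x in Set.Ioo (0 : ℝ) 1,
        Gamma (a + k) / k.factorial * (x ^ (b + k - 1) * (1 - x) ^ (c - b - 1)))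
      (∫ x in Set.Ioo (0 : ℝ) 1, Gamma a * (x ^ (b - 1) * (1 - x) ^ (c - a - b - 1))) := by
  refine hasSum_integral_of_nonneg (fun k ↦ Measurable.aestronglyMeasurable (by fun_prop))
    (fun k ↦ ae_restrict_of_forall_mem measurableSet_Ioo fun x ⟨hx0, hx1⟩ ↦ ?_)
    (ae_restrict_of_forall_mem measurableSet_Ioo fun x ⟨hx0, hx1⟩ ↦ ?_)
    ((integrableOn_rpow_mul_one_sub_rpow hb (by linarith)).const_mul _)
  · have : 0 < Gamma (a + k) := Gamma_pos_of_pos (by positivity)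
    have : 0 < 1 - x := sub_pos.2 hx1
    rw [Pi.zero_apply]
    positivity
  · have ha_ne (m : ℕ) : a ≠ -m := by linarith [m.cast_nonneg (α := ℝ)]
    convert! (hasSum_Gamma_add_div_factorial_mul_pow ha_ne
      (abs_lt.2 ⟨by linarith, hx1⟩)).mul_right (x ^ (b - 1) * (1 - x) ^ (c - b - 1)) using 1
    · ext k
      rw [add_sub_right_comm, rpow_add hx0, rpow_natCast]
      ring
    · rw [show c - a - b - 1 = -a + (c - b - 1) by ring, rpow_add (sub_pos.2 hx1)]
      ring

theorem hasSum_gauss_hypergeometric (ha : 0 < a) (hb : 0 < b) (habc : a + b < c) :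
    HasSum (fun k : ℕ ↦ Gamma (a + k) * Gamma (b + k) / (k.factorial * Gamma (c + k)))
      (Gamma a * Gamma b * Gamma (c - a - b) / (Gamma (c - a) * Gamma (c - b))) := by
  have hcb : 0 < c - b := by linarith
  have h_Gamma : Gamma (c - b) ≠ 0 := (Gamma_pos_of_pos hcb).ne'
  convert! (hasSum_integral_Gamma_add_div_factorial ha hb habc).mul_right (Gamma (c - b))⁻¹ using 1
  · ext k
    rw [integral_const_mul, integral_rpow_mul_one_sub_rpow (by positivity) hcb,
      ProbabilityTheory.beta, show b + k + (c - b) = c + k by ring]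
    field_simp
  · rw [integral_const_mul, integral_rpow_mul_one_sub_rpow hb (by linarith),
      ProbabilityTheory.beta, show b + (c - a - b) = c - a by ring]
    field_simp

end Gauss

section WeightedSums

lemma tendsto_sub_div_of_tendsto_succ_div {𝕜 : Type*} [NormedField 𝕜] {w : ℕ → 𝕜}
    (hw : Tendsto (fun n ↦ w (n + 1) / w n) atTop (𝓝 1)) (k : ℕ) :
    Tendsto (fun n ↦ w (n - k) / w n) atTop (𝓝 1) := by
  have hw_ne : ∀ᶠ n in atTop, w n ≠ 0 :=
    (hw.eventually_ne one_ne_zero).mono fun n h h0 ↦ h (by simp [h0])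
  have h_add (k : ℕ) : Tendsto (fun n ↦ w n / w (n + k)) atTop (𝓝 1) := by
    induction k with
    | zero => exact tendsto_const_nhds.congr' (hw_ne.mono fun n h ↦ (div_self h).symm)
    | succ k ih =>
      have h_step := (hw.inv₀ one_ne_zero).comp (tendsto_add_atTop_nat k)
      have h_mul := ih.mul h_step
      rw [inv_one, mul_one] at h_mul
      refine h_mul.congr' ?_
      filter_upwards [(tendsto_add_atTop_nat k).eventually hw_ne] with n hn
      simp only [Function.comp_apply, inv_div, div_mul_div_cancel₀ hn, add_assoc]
  refine ((h_add k).comp (tendsto_sub_atTop_nat k)).congr' ?_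
  filter_upwards [eventually_ge_atTop k] with n hn
  simp only [Function.comp_apply, Nat.sub_add_cancel hn]

lemma tendsto_sum_range_div_smul {E : Type*} [NormedAddCommGroup E] [NormedSpace ℝ E]
    [CompleteSpace E] {w : ℕ → ℝ} {a : ℕ → E} (hw_mono : Monotone w) (hw_zero : 0 ≤ w 0)
    (hw : Tendsto (fun n ↦ w (n + 1) / w n) atTop (𝓝 1)) (ha : Summable fun k ↦ ‖a k‖) :
    Tendsto (fun N ↦ ∑ k ∈ range N, (w (N - k) / w N) • a k) atTop (𝓝 (∑' k, a k)) := by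
  have hw_nonneg (n : ℕ) : 0 ≤ w n := hw_zero.trans (hw_mono n.zero_le)
  simp only [sum_eq_tsum_indicator _ (range _)]
  refine tendsto_tsum_of_dominated_convergence ha (fun k ↦ ?_) (.of_forall fun N k ↦ ?_)
  · rw [← one_smul ℝ (a k)]
    refine ((tendsto_sub_div_of_tendsto_succ_div hw k).smul_const (a k)).congr' ?_
    filter_upwards [eventually_gt_atTop k] with N hN
    rw [Set.indicator_of_mem (by simpa using hN)]
  · refine (norm_indicator_le_norm_self _ k).trans ?_
    rw [norm_smul, norm_of_nonneg (div_nonneg (hw_nonneg _) (hw_nonneg _))]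
    exact mul_le_of_le_one_left (norm_nonneg _)
      (div_le_one_of_le₀ (hw_mono (N.sub_le k)) (hw_nonneg N))

end WeightedSums

section ScaledCentralBinom

/-- The central binomial coefficient `B_n`, scaled by the factor `n / 4 ^ n`; it grows like
`√(n / π)`. After division by `N B_N`, the second summand of `v_{N,k}` becomes a ratio of two
values of this sequence. -/
noncomputable def scaledCentralBinom (n : ℕ) : ℝ := n * n.centralBinom / 4 ^ n

@[simp]
lemma scaledCentralBinom_zero : scaledCentralBinom 0 = 0 := by simp [scaledCentralBinom]

lemma scaledCentralBinom_pos {n : ℕ} (hn : n ≠ 0) : 0 < scaledCentralBinom n := by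
  have := n.centralBinom_pos
  unfold scaledCentralBinom
  positivity

lemma scaledCentralBinom_succ {n : ℕ} (hn : n ≠ 0) :
    scaledCentralBinom (n + 1) = (1 + 1 / (2 * n)) * scaledCentralBinom n := by
  have h : ((n : ℝ) + 1) * (n + 1).centralBinom = 2 * (2 * n + 1) * n.centralBinom :=
    mod_cast n.succ_mul_centralBinom_succ
  unfold scaledCentralBinom
  rw [Nat.cast_succ, h]
  field_simp
  ring

lemma monotone_scaledCentralBinom : Monotone scaledCentralBinom := by
  refine monotone_nat_of_le_succ fun n ↦ ?_
  rcases eq_or_ne n 0 with rfl | hn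
  · simpa using (scaledCentralBinom_pos one_ne_zero).le
  · rw [scaledCentralBinom_succ hn]
    exact le_mul_of_one_le_left (scaledCentralBinom_pos hn).le (by simp)

lemma sqrt_div_four_le_scaledCentralBinom (n : ℕ) : √(n / 4) ≤ scaledCentralBinom n := by
  refine sqrt_le_iff.2 ⟨?_, ?_⟩
  · exact scaledCentralBinom_zero.ge.trans (monotone_scaledCentralBinom n.zero_le)
  induction n with
  | zero => simp
  | succ n ih =>
    rcases eq_or_ne n 0 with rfl | hn
    · norm_num [scaledCentralBinom, Nat.centralBinom]
    have h_factor : ((n + 1 : ℕ) : ℝ) / 4 ≤ (1 + 1 / (2 * n)) ^ 2 * (n / 4) := by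
      field_simp
      push_cast
      nlinarith
    calc ((n + 1 : ℕ) : ℝ) / 4 ≤ (1 + 1 / (2 * n)) ^ 2 * (n / 4) := h_factor
      _ ≤ (1 + 1 / (2 * n)) ^ 2 * scaledCentralBinom n ^ 2 := by gcongr
      _ = scaledCentralBinom (n + 1) ^ 2 := by rw [scaledCentralBinom_succ hn, mul_pow]

lemma tendsto_scaledCentralBinom_atTop : Tendsto scaledCentralBinom atTop atTop :=
  tendsto_atTop_mono sqrt_div_four_le_scaledCentralBinom <|
    tendsto_sqrt_atTop.comp (tendsto_natCast_atTop_atTop.atTop_div_const four_pos)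

lemma tendsto_scaledCentralBinom_succ_div :
    Tendsto (fun n ↦ scaledCentralBinom (n + 1) / scaledCentralBinom n) atTop (𝓝 1) := by
  have h : Tendsto (fun n : ℕ ↦ 1 + (1 : ℝ) / (2 * n)) atTop (𝓝 (1 + 0)) :=
    tendsto_const_nhds.add <|
      tendsto_const_nhds.div_atTop (tendsto_natCast_atTop_atTop.const_mul_atTop two_pos)
  rw [add_zero] at h
  refine h.congr' ?_
  filter_upwards [eventually_ne_atTop 0] with n hn
  rw [scaledCentralBinom_succ hn, mul_div_cancel_right₀ _ (scaledCentralBinom_pos hn).ne']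

end ScaledCentralBinom

section LimitEdgeCost

/-- The limit, as `N → ∞`, of the contribution to `E_N(p) / N` of the edges spanning `2k + 1`
spacings: a matching of `2N` points has on average about `N C_k / (2 ⬝ 4 ^ k)` of them, each of
expected cost `Γ(2k + 1 + p) / (2k)!`. -/
noncomputable def limitEdgeCost (p : ℝ) (k : ℕ) : ℝ :=
  catalan k / (2 * 4 ^ k) * (Gamma (2 * k + 1 + p) / (2 * k).factorial)

lemma catalan_mul_factorial_mul_factorial_succ (k : ℕ) :
    catalan k * (k.factorial * (k + 1).factorial) = (2 * k).factorial := by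
  have h := Nat.choose_mul_factorial_mul_factorial (Nat.le_mul_of_pos_left k two_pos)
  rw [← Nat.centralBinom_eq_two_mul_choose, ← succ_mul_catalan_eq_centralBinom, two_mul,
    Nat.add_sub_cancel, ← two_mul] at h
  rw [← h, Nat.factorial_succ]
  ring

lemma limitEdgeCost_eq_Gamma_mul_Gamma (p : ℝ) (k : ℕ) :
    limitEdgeCost p k = 2 ^ p / (2 * √π) * (Gamma ((1 + p) / 2 + k) * Gamma (1 + p / 2 + k) /
      (k.factorial * Gamma (2 + k))) := by
  have h_dup := Gamma_mul_Gamma_add_half ((1 + p) / 2 + k)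
  rw [show (1 + p) / 2 + (k : ℝ) + 1 / 2 = 1 + p / 2 + k by ring,
    show 2 * ((1 + p) / 2 + (k : ℝ)) = 2 * k + 1 + p by ring,
    show 1 - (2 * (k : ℝ) + 1 + p) = -p - ((2 * k : ℕ) : ℝ) by push_cast; ring,
    rpow_sub two_pos, rpow_natCast, rpow_neg two_pos.le, pow_mul] at h_dup
  have h_Gamma : Gamma (2 + k) = ((k + 1).factorial : ℝ) := by
    rw [← Gamma_nat_eq_factorial, Nat.cast_succ, add_assoc, one_add_one_eq_two, add_comm]
  have h_catalan : (catalan k : ℝ) / (2 * k).factorial =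
      1 / (k.factorial * (k + 1).factorial) := by
    rw [div_eq_div_iff (by positivity) (by positivity), one_mul]
    exact_mod_cast catalan_mul_factorial_mul_factorial_succ k
  calc limitEdgeCost p k
      = catalan k / (2 * k).factorial * Gamma (2 * k + 1 + p) / (2 * 4 ^ k) := by
        unfold limitEdgeCost; ring
    _ = _ := by
        rw [h_catalan, h_dup, h_Gamma]
        field_simp
        norm_num

lemma gauss_value_eq_leading_constant (p : ℝ) :
    2 ^ p / (2 * √π) * (Gamma ((1 + p) / 2) * Gamma (1 + p / 2) *
        Gamma (2 - (1 + p) / 2 - (1 + p / 2)) /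
        (Gamma (2 - (1 + p) / 2) * Gamma (2 - (1 + p / 2)))) =
      Gamma (1 / 2 - p) * Gamma (p + 1) / (2 ^ p * √π * Gamma (2 - p)) := by
  have h_num := Gamma_mul_Gamma_add_half ((1 + p) / 2)
  rw [show (1 + p) / 2 + 1 / 2 = 1 + p / 2 by ring, show 2 * ((1 + p) / 2) = p + 1 by ring,
    show 1 - (p + 1) = -p by ring, rpow_neg two_pos.le] at h_num
  have h_den := Gamma_mul_Gamma_add_half (2 - (1 + p / 2))
  rw [show 2 - (1 + p / 2) + 1 / 2 = 2 - (1 + p) / 2 by ring,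
    show 2 * (2 - (1 + p / 2)) = 2 - p by ring, show 1 - (2 - p) = p - 1 by ring,
    rpow_sub two_pos, rpow_one, mul_comm] at h_den
  rw [h_num, h_den, show 2 - (1 + p) / 2 - (1 + p / 2) = 1 / 2 - p by ring]
  field_simp

lemma hasSum_limitEdgeCost {p : ℝ} (hp0 : -1 < p) (hp1 : p < 1 / 2) :
    HasSum (limitEdgeCost p)
      (Gamma (1 / 2 - p) * Gamma (p + 1) / (2 ^ p * √π * Gamma (2 - p))) := by
  rw [← gauss_value_eq_leading_constant, funext (limitEdgeCost_eq_Gamma_mul_Gamma p)]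
  exact (hasSum_gauss_hypergeometric (by linarith) (by linarith) (by linarith)).mul_left _

end LimitEdgeCost

lemma dyckEdgeCount_div_centralBinom_mul {N k : ℕ} (hk : k < N) :
    dyckEdgeCount N k / (N.centralBinom * N) = catalan k / (2 * 4 ^ k) *
      (1 / 2 / scaledCentralBinom N + scaledCentralBinom (N - k) / scaledCentralBinom N) := by
  obtain ⟨m, rfl⟩ := Nat.exists_eq_add_of_lt hk
  have h_sub : k + m + 1 - k = m + 1 := by omega
  have h_cast : ((k + m + 1 : ℕ) : ℝ) - k = ((m + 1 : ℕ) : ℝ) := by push_cast; ring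
  have h_ne : ((k + m + 1).centralBinom : ℝ) ≠ 0 := mod_cast Nat.centralBinom_ne_zero _
  have h_pow : (4 : ℝ) ^ (k + m + 1) = 4 ^ k * 4 ^ m * 4 := by rw [pow_succ, pow_add]
  unfold dyckEdgeCount scaledCentralBinom
  rw [h_sub, h_cast, Nat.add_sub_cancel, ← Nat.centralBinom_eq_two_mul_choose, h_pow]
  field_simp
  ring

lemma dyckCostES_div_eq (p : ℝ) (N : ℕ) :
    dyckCostES p N / N = 1 / 2 / scaledCentralBinom N * ∑ k ∈ range N, limitEdgeCost p k +
      ∑ k ∈ range N, (scaledCentralBinom (N - k) / scaledCentralBinom N) • limitEdgeCost p k := by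
  have h_term {k : ℕ} (hk : k ∈ range N) := dyckEdgeCount_div_centralBinom_mul (mem_range.1 hk)
  unfold dyckCostES
  rw [← Nat.centralBinom_eq_two_mul_choose, mul_sum, mul_sum, sum_div, ← sum_add_distrib]
  refine sum_congr rfl fun k hk ↦ ?_
  calc (N.centralBinom : ℝ)⁻¹ *
        (dyckEdgeCount N k * Gamma (2 * k + 1 + p) / (2 * k).factorial) / N
      = dyckEdgeCount N k / (N.centralBinom * N) *
          (Gamma (2 * k + 1 + p) / (2 * k).factorial) := by ring
    _ = _ := by rw [h_term hk, limitEdgeCost, smul_eq_mul]; ring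

theorem dyckCostES_leading_low_p_general (p : ℝ) (hp0 : -1 < p) (hp1 : p < 1 / 2) :
    Tendsto (fun N : ℕ ↦ dyckCostES p N / N) atTop
      (𝓝 (Gamma (1 / 2 - p) * Gamma (p + 1) / (2 ^ p * √π * Gamma (2 - p)))) := by
  have h_sum := hasSum_limitEdgeCost hp0 hp1
  have h_inv : Tendsto (fun N ↦ 1 / 2 / scaledCentralBinom N) atTop (𝓝 0) :=
    tendsto_const_nhds.div_atTop tendsto_scaledCentralBinom_atTop
  have h_main := tendsto_sum_range_div_smul monotone_scaledCentralBinom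
    scaledCentralBinom_zero.ge tendsto_scaledCentralBinom_succ_div h_sum.summable.norm
  simpa only [dyckCostES_div_eq, h_sum.tsum_eq, zero_mul, zero_add] using
    (h_inv.mul h_sum.tendsto_sum_nat).add h_main

theorem dyckCostES_leading_low_p (p : ℝ) (hp0 : 0 < p) (hp1 : p < 1 / 2) :
    Filter.Tendsto
      (fun N : ℕ => dyckCostES p N / (N : ℝ))
      Filter.atTop
      (nhds (Real.Gamma (1 / 2 - p) * Real.Gamma (p + 1) /
        ((2 : ℝ) ^ p * Real.sqrt Real.pi * Real.Gamma (2 - p)))) := by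
  exact dyckCostES_leading_low_p_general p (by linarith) hp1
end

section
/- Define, for N ≥ 2, E_N = B_N^{−1} · Σ_{k=0}^{N−1} v_{N,k} · Γ(2k + 3/2)/(2k)!, where B_N = binom(2N,N), C_k = binom(2k,k)/(k+1), and v_{N,k} = C_k · (4^{N−k−1} + ((N−k)/2) · B_{N−k}). Then the limit as N → ∞ of E_N / (N · log N) equals 1/√(2π). -/
/-- Average cost of the Dyck matching in the exponential-spacings model at `p = 1/2`. -/
noncomputable def dyckCostEShalf (N : ℕ) : ℝ :=
  ((Nat.choose (2 * N) N : ℝ))⁻¹ *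
    ∑ k ∈ Finset.range N,
      dyckEdgeCount N k * Real.Gamma (2 * (k : ℝ) + 3 / 2) / ((2 * k).factorial : ℝ)

/-!
Write `β n = B_n / 4^n`. Dividing numerator and denominator of `E_N` by `4^N` exhibits it as a
convolution `(β N)⁻¹ * ∑ k < N, w k * u (N - k)`, where `(k + 1) * w k → √(2 / π)` by the
asymptotics of Gamma ratios, and `u m = 1 / 4 + m / 2 * β m`. Since `u` is increasing while
`u m / m` is decreasing, `(1 - k / N) * u N ≤ u (N - k) ≤ u N`. The sum `∑ k < N, w k` is of order
`log N`, whereas the correction `N⁻¹ * ∑ k < N, k * w k` stays bounded, so the convolution is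
asymptotic to `√(2 / π) * u N * log N`. Finally `u N / (N * β N) → 1 / 2`.
-/

open Filter Finset Real Topology
open scoped Nat

theorem Gamma_mul_prod_add_natCast {s : ℝ} (hs : ∀ m : ℕ, s ≠ -m) (n : ℕ) :
    Gamma s * ∏ j ∈ range n, (s + j) = Gamma (s + n) := by
  induction n with
  | zero => simp
  | succ n ih =>
    have hsn : s + n ≠ 0 := fun h => hs n (eq_neg_of_add_eq_zero_left h)
    rw [prod_range_succ, ← mul_assoc, ih, Nat.cast_succ, ← add_assoc, Gamma_add_one hsn, mul_comm]

theorem tendsto_Gamma_add_natCast_div_rpow_mul_factorial {s : ℝ} (hs : ∀ m : ℕ, s ≠ -m) :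
    Tendsto (fun n : ℕ => Gamma (s + (n + 1)) / ((n : ℝ) ^ s * n !)) atTop (𝓝 1) := by
  have hΓ : Gamma s ≠ 0 := Gamma_ne_zero hs
  have h := (GammaSeq_tendsto_Gamma s).inv₀ hΓ |>.const_mul (Gamma s)
  rw [mul_inv_cancel₀ hΓ] at h
  refine h.congr fun n => ?_
  rw [GammaSeq, inv_div, ← mul_div_assoc, Gamma_mul_prod_add_natCast hs, Nat.cast_succ]

theorem tendsto_log_natCast_atTop : Tendsto (fun n : ℕ => log n) atTop atTop :=
  tendsto_log_atTop.comp tendsto_natCast_atTop_atTop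

theorem tendsto_harmonic_div_log :
    Tendsto (fun n : ℕ => (harmonic n : ℝ) / log n) atTop (𝓝 1) := by
  have h := (tendsto_harmonic_sub_log.div_atTop tendsto_log_natCast_atTop).add_const 1
  rw [zero_add] at h
  refine h.congr' ?_
  filter_upwards [tendsto_log_natCast_atTop.eventually_ne_atTop 0] with n hn
  rw [sub_div, div_self hn, sub_add_cancel]

theorem tendsto_inv_log_smul_sum_range {E : Type*} [NormedAddCommGroup E] [NormedSpace ℝ E]
    {w : ℕ → E} {c : E} (h : Tendsto (fun k : ℕ => ((k : ℝ) + 1) • w k) atTop (𝓝 c)) :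
    Tendsto (fun n : ℕ => (log n)⁻¹ • ∑ k ∈ range n, w k) atTop (𝓝 c) := by
  let r : ℕ → ℝ := fun k => 1 / ((k : ℝ) + 1)
  have hr : ∀ n, ∑ k ∈ range n, r k = harmonic n := fun n => by simp [r, harmonic]
  have herr : (fun k => w k - r k • c) =o[atTop] r := by
    have h0 := (Asymptotics.isLittleO_one_iff ℝ).2 (tendsto_sub_nhds_zero_iff.2 h)
    refine ((Asymptotics.isBigO_refl r atTop).smul_isLittleO h0).congr (fun k => ?_) fun k => ?_
    · have hk : (k : ℝ) + 1 ≠ 0 := by positivity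
      simp only [r, smul_sub, smul_smul, one_div_mul_cancel hk, one_smul]
    · simp
  have hsum : (fun n => ∑ k ∈ range n, (w k - r k • c)) =o[atTop] fun n : ℕ => log n := by
    refine (herr.sum_range (fun k => by positivity)
      tendsto_sum_range_one_div_nat_succ_atTop).trans_isBigO ?_
    simp only [hr]
    refine Asymptotics.isBigO_of_div_tendsto_nhds ?_ 1 tendsto_harmonic_div_log
    filter_upwards [tendsto_log_natCast_atTop.eventually_ne_atTop 0] with n hn h0
      using absurd h0 hn
  have hlim := hsum.tendsto_inv_smul_nhds_zero.add (tendsto_harmonic_div_log.smul_const c)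
  rw [zero_add, one_smul] at hlim
  refine hlim.congr fun n => ?_
  rw [sum_sub_distrib, ← sum_smul, hr, smul_sub, smul_smul, inv_mul_eq_div, sub_add_cancel]

theorem sum_range_mul_sub_le_of_monotone {R : Type*} [Semiring R] [PartialOrder R] [IsOrderedRing R]
    {w u : ℕ → R} (hw : ∀ k, 0 ≤ w k) (hu : Monotone u) (n : ℕ) :
    ∑ k ∈ range n, w k * u (n - k) ≤ (∑ k ∈ range n, w k) * u n := by
  rw [sum_mul]
  exact sum_le_sum fun k _ => mul_le_mul_of_nonneg_left (hu (Nat.sub_le n k)) (hw k)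

theorem le_sum_range_mul_sub_of_antitoneOn_div {K : Type*} [Field K] [LinearOrder K]
    [IsStrictOrderedRing K] {w u : ℕ → K} (hw : ∀ k, 0 ≤ w k)
    (hu : AntitoneOn (fun n : ℕ => u n / n) (Set.Ioi 0)) (n : ℕ) :
    (∑ k ∈ range n, w k - (n : K)⁻¹ * ∑ k ∈ range n, k * w k) * u n ≤
      ∑ k ∈ range n, w k * u (n - k) := by
  rw [mul_sum, ← sum_sub_distrib, sum_mul]
  refine sum_le_sum fun k hk => ?_
  have hkn : k < n := mem_range.1 hk
  have hn : (0 : K) < n := by exact_mod_cast k.zero_le.trans_lt hkn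
  have hnk : (0 : K) < (n - k : ℕ) := by exact_mod_cast Nat.sub_pos_of_lt hkn
  have hratio : u n / n ≤ u (n - k) / (n - k : ℕ) :=
    hu (Nat.sub_pos_of_lt hkn) (k.zero_le.trans_lt hkn) (Nat.sub_le n k)
  calc (w k - (n : K)⁻¹ * (k * w k)) * u n
      = w k * (u n / n * (n - k : ℕ)) := by
        rw [Nat.cast_sub hkn.le]
        field_simp
    _ ≤ w k * u (n - k) :=
        mul_le_mul_of_nonneg_left ((le_div_iff₀ hnk).1 hratio) (hw k)

theorem tendsto_sum_range_mul_sub_div_mul_log {w u : ℕ → ℝ} {c : ℝ} (hw : ∀ k, 0 ≤ w k)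
    (hwc : Tendsto (fun k : ℕ => ((k : ℝ) + 1) * w k) atTop (𝓝 c)) (hu : Monotone u)
    (hu_div : AntitoneOn (fun n : ℕ => u n / n) (Set.Ioi 0)) (hu_pos : ∀ᶠ n in atTop, 0 < u n) :
    Tendsto (fun n : ℕ => (∑ k ∈ range n, w k * u (n - k)) / (u n * log n)) atTop (𝓝 c) := by
  have hupper : Tendsto (fun n : ℕ => (∑ k ∈ range n, w k) / log n) atTop (𝓝 c) := by
    simpa only [smul_eq_mul, inv_mul_eq_div] using tendsto_inv_log_smul_sum_range hwc
  have hmean : Tendsto (fun k : ℕ => k * w k) atTop (𝓝 c) := by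
    have h := (tendsto_natCast_div_add_atTop (1 : ℝ)).mul hwc
    rw [one_mul] at h
    refine h.congr fun k => ?_
    have hk : (k : ℝ) + 1 ≠ 0 := by positivity
    rw [← mul_assoc, div_mul_cancel₀ _ hk]
  have hlower := hupper.sub (hmean.cesaro.div_atTop tendsto_log_natCast_atTop)
  rw [sub_zero] at hlower
  refine tendsto_of_tendsto_of_tendsto_of_le_of_le' hlower hupper ?_ ?_ <;>
    filter_upwards [hu_pos, tendsto_log_natCast_atTop.eventually_gt_atTop 0] with n hun hlogn
  · rw [← sub_div, ← mul_div_mul_left _ _ hun.ne', mul_comm (u n)]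
    gcongr
    exact le_sum_range_mul_sub_of_antitoneOn_div hw hu_div n
  · rw [← mul_div_mul_left (∑ k ∈ range n, w k) _ hun.ne', mul_comm (u n) (∑ k ∈ range n, w k)]
    gcongr
    exact sum_range_mul_sub_le_of_monotone hw hu n

/-- The probability `B_n / 4^n` that a simple random walk is at its origin after `2n` steps. -/
noncomputable def returnProb (n : ℕ) : ℝ := n.centralBinom / 4 ^ n

theorem returnProb_pos (n : ℕ) : 0 < returnProb n :=
  div_pos (mod_cast n.centralBinom_pos) (by positivity)

theorem returnProb_mul_four_pow (n : ℕ) : returnProb n * 4 ^ n = (2 * n).choose n := by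
  rw [returnProb, div_mul_cancel₀ _ (by positivity), Nat.centralBinom_eq_two_mul_choose]

theorem succ_mul_returnProb_succ (n : ℕ) :
    ((n : ℝ) + 1) * returnProb (n + 1) = (n + 1 / 2) * returnProb n := by
  have h : ((n : ℝ) + 1) * (n + 1).centralBinom = 2 * (2 * n + 1) * n.centralBinom := by
    exact_mod_cast n.succ_mul_centralBinom_succ
  rw [returnProb, returnProb, ← mul_div_assoc, h, pow_succ]
  field_simp
  ring

theorem antitone_returnProb : Antitone returnProb := by
  refine antitone_nat_of_succ_le fun n => ?_
  refine le_of_mul_le_mul_left (a := (n : ℝ) + 1) ?_ (by positivity)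
  rw [succ_mul_returnProb_succ]
  exact mul_le_mul_of_nonneg_right (by norm_num) (returnProb_pos n).le

theorem returnProb_eq_Gamma (n : ℕ) :
    returnProb n = Gamma (n + 1 / 2) / (√π * n !) := by
  induction n with
  | zero => simp [returnProb, -one_div, Gamma_one_half_eq, div_self (sqrt_pos.2 pi_pos).ne']
  | succ n ih =>
    have hn : (n : ℝ) + 1 ≠ 0 := by positivity
    refine mul_left_cancel₀ hn ?_
    rw [succ_mul_returnProb_succ, ih, Nat.cast_succ, add_right_comm, Gamma_add_one (by positivity),
      Nat.factorial_succ]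
    push_cast
    field_simp

theorem tendsto_sqrt_mul_returnProb :
    Tendsto (fun n : ℕ => √n * returnProb n) atTop (𝓝 (√π)⁻¹) := by
  have hs : ∀ m : ℕ, (-1 / 2 : ℝ) ≠ -m := fun m h => by
    have : 1 = 2 * m := by exact_mod_cast (by linarith : (1 : ℝ) = 2 * m)
    omega
  have h := (tendsto_Gamma_add_natCast_div_rpow_mul_factorial hs).const_mul (√π)⁻¹
  rw [mul_one] at h
  refine h.congr fun n => ?_
  have hΓ : (-1 / 2 : ℝ) + (n + 1) = n + 1 / 2 := by ring
  rw [returnProb_eq_Gamma, hΓ, neg_div, rpow_neg n.cast_nonneg, ← sqrt_eq_rpow]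
  field_simp

theorem tendsto_natCast_mul_returnProb_atTop :
    Tendsto (fun n : ℕ => n * returnProb n) atTop atTop := by
  have hsqrt : Tendsto (fun n : ℕ => √n) atTop atTop :=
    tendsto_sqrt_atTop.comp tendsto_natCast_atTop_atTop
  refine (hsqrt.atTop_mul_pos (by positivity) tendsto_sqrt_mul_returnProb).congr fun n => ?_
  rw [← mul_assoc, mul_self_sqrt n.cast_nonneg]

/-- The expected cost `Γ(2k + 3/2) / (2k)!` of an edge of horizontal length `2k + 1`, weighted by
the number `C_k` of Dyck paths below it and normalized by `4^k`. -/
noncomputable def edgeWeight (k : ℕ) : ℝ :=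
  catalan k / 4 ^ k * (Gamma (2 * k + 3 / 2) / (2 * k)!)

theorem edgeWeight_nonneg (k : ℕ) : 0 ≤ edgeWeight k := by
  unfold edgeWeight
  positivity

theorem succ_mul_edgeWeight (k : ℕ) :
    ((k : ℝ) + 1) * edgeWeight k = returnProb k * (Gamma (2 * k + 3 / 2) / (2 * k)!) := by
  have h : ((k : ℝ) + 1) * catalan k = k.centralBinom := by
    exact_mod_cast succ_mul_catalan_eq_centralBinom k
  rw [edgeWeight, returnProb, ← h, ← mul_assoc, mul_div_assoc]

theorem tendsto_succ_mul_edgeWeight :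
    Tendsto (fun k : ℕ => ((k : ℝ) + 1) * edgeWeight k) atTop (𝓝 √(2 / π)) := by
  have hs : ∀ m : ℕ, (1 / 2 : ℝ) ≠ -m := fun m => by
    have : (0 : ℝ) ≤ m := m.cast_nonneg
    linarith
  have hcost := (tendsto_Gamma_add_natCast_div_rpow_mul_factorial hs).comp
    (tendsto_id.const_mul_atTop' two_pos)
  have h := (tendsto_sqrt_mul_returnProb.mul hcost).const_mul √2
  rw [mul_one, ← div_eq_mul_inv, ← sqrt_div two_pos.le] at h
  refine h.congr' ?_
  filter_upwards [eventually_gt_atTop 0] with k hk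
  have hΓ : (1 / 2 : ℝ) + (2 * k + 1) = 2 * k + 3 / 2 := by ring
  simp only [Function.comp_apply, id, succ_mul_edgeWeight, ← sqrt_eq_rpow, Nat.cast_mul,
    Nat.cast_ofNat, hΓ, sqrt_mul two_pos.le]
  have hsqrt : √(k : ℝ) ≠ 0 := (sqrt_pos.2 (mod_cast hk)).ne'
  field_simp [hsqrt]

/-- The number `4^(m-1) + (m/2) B_m` of ways to place an edge together with everything outside it,
when its endpoints and the points outside number `2m` in total, normalized by `4^m`. -/
noncomputable def edgePlacement (m : ℕ) : ℝ := 1 / 4 + m / 2 * returnProb m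

theorem edgePlacement_pos (m : ℕ) : 0 < edgePlacement m := by
  have := returnProb_pos m
  unfold edgePlacement
  positivity

theorem monotone_edgePlacement : Monotone edgePlacement := by
  refine monotone_nat_of_le_succ fun m => ?_
  have hrec := succ_mul_returnProb_succ m
  have hpos := returnProb_pos m
  simp only [edgePlacement, Nat.cast_succ]
  linarith

theorem edgePlacement_div_natCast {m : ℕ} (hm : 0 < m) :
    edgePlacement m / m = 1 / 4 / m + returnProb m / 2 := by
  have hm' : (m : ℝ) ≠ 0 := mod_cast hm.ne'
  rw [edgePlacement]
  field_simp

theorem antitoneOn_edgePlacement_div_natCast :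
    AntitoneOn (fun m : ℕ => edgePlacement m / m) (Set.Ioi 0) := by
  intro m hm n hn hmn
  have hm' : (0 : ℝ) < m := mod_cast hm
  simp only [edgePlacement_div_natCast hm, edgePlacement_div_natCast hn]
  gcongr
  exact antitone_returnProb hmn

theorem tendsto_edgePlacement_div_natCast_mul_returnProb :
    Tendsto (fun n : ℕ => edgePlacement n / (n * returnProb n)) atTop (𝓝 (1 / 2)) := by
  have h := (tendsto_natCast_mul_returnProb_atTop.const_div_atTop (1 / 4)).add_const (1 / 2)
  rw [zero_add] at h
  refine h.congr' ?_
  filter_upwards [tendsto_natCast_mul_returnProb_atTop.eventually_ne_atTop 0] with n hn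
  rw [edgePlacement, add_div, div_mul_eq_mul_div, div_right_comm (n * returnProb n), div_self hn]

theorem dyckEdgeCount_eq {N k : ℕ} (hk : k < N) :
    dyckEdgeCount N k = 4 ^ N * (catalan k / 4 ^ k * edgePlacement (N - k)) := by
  obtain ⟨m, rfl⟩ : ∃ m, N = k + (m + 1) := Nat.exists_eq_add_of_lt hk
  rw [dyckEdgeCount, edgePlacement, Nat.add_sub_cancel_left, Nat.add_sub_cancel,
    ← returnProb_mul_four_pow]
  push_cast
  field_simp
  ring

theorem dyckCostEShalf_eq (N : ℕ) :
    dyckCostEShalf N =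
      (returnProb N)⁻¹ * ∑ k ∈ range N, edgeWeight k * edgePlacement (N - k) := by
  have hterm : ∀ k ∈ range N, dyckEdgeCount N k * Gamma (2 * k + 3 / 2) / (2 * k)! =
      4 ^ N * (edgeWeight k * edgePlacement (N - k)) := fun k hk => by
    rw [dyckEdgeCount_eq (mem_range.1 hk), edgeWeight]
    ring
  rw [dyckCostEShalf, sum_congr rfl hterm, ← mul_sum, ← returnProb_mul_four_pow, mul_inv, mul_assoc,
    inv_mul_cancel_left₀ (by positivity)]

theorem dyckCostES_leading_half :
    Filter.Tendsto
      (fun N : ℕ => dyckCostEShalf N / ((N : ℝ) * Real.log N))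
      Filter.atTop
      (nhds (1 / Real.sqrt (2 * Real.pi))) := by
  have hconv := tendsto_sum_range_mul_sub_div_mul_log edgeWeight_nonneg tendsto_succ_mul_edgeWeight
    monotone_edgePlacement antitoneOn_edgePlacement_div_natCast (.of_forall edgePlacement_pos)
  have hlim : 1 / √(2 * π) = 1 / 2 * √(2 / π) := by
    rw [sqrt_mul two_pos.le, sqrt_div two_pos.le]
    field_simp
    rw [sq_sqrt two_pos.le]
  rw [hlim]
  refine (tendsto_edgePlacement_div_natCast_mul_returnProb.mul hconv).congr fun N => ?_
  have hu := (edgePlacement_pos N).ne'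
  rw [dyckCostEShalf_eq]
  field_simp
end

section
/- Let 1/2 < p < 1 be real. Define, for N ≥ 1, E_N(p) = B_N^{−1} · Σ_{k=0}^{N−1} v_{N,k} · (2k+1)^p, where B_N = binom(2N,N), C_k = binom(2k,k)/(k+1), and v_{N,k} = C_k · (4^{N−k−1} + ((N−k)/2) · B_{N−k}). Then the limit as N → ∞ of E_N(p) / N^{1/2 + p} equals 2^p · Γ(p − 1/2) / (4 · Γ(p+1)), the same universal constant as in the exponential-spacings model. -/
/-- Average cost of the Dyck matching in the uniform-spacings model. -/
noncomputable def dyckCostUS (p : ℝ) (N : ℕ) : ℝ :=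
  ((Nat.choose (2 * N) N : ℝ))⁻¹ *
    ∑ k ∈ Finset.range N,
      dyckEdgeCount N k * (2 * (k : ℝ) + 1) ^ p

/-!
Dividing by `4 ^ N`, the cost is a convolution divided by the normalised central binomial
coefficient, because an edge over `k` nested pairs is counted by `C_k` times the number of edges
without nested pairs on the remaining points: `v_{k+m,k} = C_k v_{m,0}`. By Wallis' product
`B_n / 4 ^ n ∼ (π n) ^ (-1/2)`, so the two convolved sequences behave like `n ^ (p - 3/2)` and
`n ^ (1/2)`. For sequences with `f n ∼ A n ^ c` and `g n ∼ B n ^ d`, where `c, d > -1`, the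
convolution at `n`, divided by `(n + 1) ^ (c + d + 1)`, is the integral over `(0, 1)` of a step
function converging to `A B x ^ c (1 - x) ^ d`. On the `k`-th step `x ≤ (k + 1) / (n + 1)` and
`1 - x ≤ (n - k + 1) / (n + 1)`, so the step functions are dominated by a multiple of an integrable
beta kernel, and the beta integral is the limit.
-/

open Filter MeasureTheory Asymptotics ProbabilityTheory
open Finset.HasAntidiagonal (antidiagonal)
open scoped Topology

/-- The sequence `f` has leading behaviour `A * n ^ c`, encoded as `f n / n ^ c → A`, so that
`A = 0` means `f n = o(n ^ c)`. -/
def HasPowerAsymptotic (f : ℕ → ℝ) (A c : ℝ) : Prop :=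
  Tendsto (fun n : ℕ ↦ f n / (n : ℝ) ^ c) atTop (𝓝 A)

namespace HasPowerAsymptotic

variable {f g : ℕ → ℝ} {A B c d : ℝ}

theorem const (A : ℝ) : HasPowerAsymptotic (fun _ ↦ A) A 0 := by
  simp [HasPowerAsymptotic]

theorem natCast : HasPowerAsymptotic (fun n ↦ (n : ℝ)) 1 1 := by
  refine tendsto_const_nhds.congr' ?_
  filter_upwards [eventually_ne_atTop 0] with n hn
  rw [Real.rpow_one, div_self (Nat.cast_ne_zero.2 hn)]

theorem mul (hf : HasPowerAsymptotic f A c) (hg : HasPowerAsymptotic g B d) :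
    HasPowerAsymptotic (fun n ↦ f n * g n) (A * B) (c + d) := by
  refine (Tendsto.mul hf hg).congr' ?_
  filter_upwards [eventually_gt_atTop 0] with n hn
  rw [div_mul_div_comm, Real.rpow_add (Nat.cast_pos.2 hn)]

theorem inv (hf : HasPowerAsymptotic f A c) (hA : A ≠ 0) :
    HasPowerAsymptotic (fun n ↦ (f n)⁻¹) A⁻¹ (-c) := by
  refine (Tendsto.inv₀ hf hA).congr fun n ↦ ?_
  rw [Real.rpow_neg n.cast_nonneg, inv_div, div_inv_eq_mul, div_eq_inv_mul]

theorem rpow (hf : HasPowerAsymptotic f A c) (hA : 0 < A) (p : ℝ) :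
    HasPowerAsymptotic (fun n ↦ f n ^ p) (A ^ p) (c * p) := by
  refine (Tendsto.rpow_const hf (.inl hA.ne')).congr' ?_
  filter_upwards [hf.eventually_const_lt hA, eventually_gt_atTop 0] with n hfn hn
  have hpow : (0 : ℝ) < (n : ℝ) ^ c := Real.rpow_pos_of_pos (Nat.cast_pos.2 hn) c
  rw [Real.div_rpow ((div_pos_iff_of_pos_right hpow).1 hfn).le hpow.le,
    Real.rpow_mul n.cast_nonneg]

theorem add_of_lt (hf : HasPowerAsymptotic f A c) (hg : HasPowerAsymptotic g B d) (hdc : d < c) :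
    HasPowerAsymptotic (fun n ↦ f n + g n) A c := by
  have hdecay : Tendsto (fun n : ℕ ↦ (n : ℝ) ^ (-(c - d))) atTop (𝓝 0) :=
    (tendsto_rpow_neg_atTop (sub_pos.2 hdc)).comp tendsto_natCast_atTop_atTop
  have hlim := Tendsto.add hf (Tendsto.mul hg hdecay)
  rw [mul_zero, add_zero] at hlim
  refine hlim.congr' ?_
  filter_upwards [eventually_gt_atTop 0] with n hn
  have hn' : (0 : ℝ) < n := Nat.cast_pos.2 hn
  have hpow : (0 : ℝ) < (n : ℝ) ^ d := Real.rpow_pos_of_pos hn' d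
  rw [neg_sub, Real.rpow_sub hn', add_div, div_mul_div_cancel₀ hpow.ne']

theorem tendsto_comp {ι : Type*} {l : Filter ι} {u : ι → ℕ} {v : ι → ℝ} {x : ℝ}
    (hf : HasPowerAsymptotic f A c) (hx : 0 < x) (hv : Tendsto v l atTop)
    (huv : Tendsto (fun i ↦ u i / v i) l (𝓝 x)) :
    Tendsto (fun i ↦ f (u i) / v i ^ c) l (𝓝 (A * x ^ c)) := by
  have hu : Tendsto u l atTop := by
    refine (tendsto_natCast_atTop_iff (R := ℝ)).1 ((huv.pos_mul_atTop hx hv).congr' ?_)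
    filter_upwards [hv.eventually_ne_atTop 0] with i hvi
    exact div_mul_cancel₀ _ hvi
  refine ((Tendsto.comp hf hu).mul (huv.rpow_const (.inl hx.ne'))).congr' ?_
  filter_upwards [hv.eventually_gt_atTop 0, hu.eventually_gt_atTop 0] with i hvi hui
  have hpow : (0 : ℝ) < (u i : ℝ) ^ c := Real.rpow_pos_of_pos (Nat.cast_pos.2 hui) c
  rw [Function.comp_apply, Real.div_rpow (u i).cast_nonneg hvi.le, div_mul_div_cancel₀ hpow.ne']

end HasPowerAsymptotic

section Shift

variable {f : ℕ → ℝ} {A c : ℝ}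

theorem hasPowerAsymptotic_iff_tendsto_div_add_one :
    HasPowerAsymptotic f A c ↔
      Tendsto (fun n : ℕ ↦ f n / ((n : ℝ) + 1) ^ c) atTop (𝓝 A) := by
  have hsucc : (fun n : ℕ ↦ (n : ℝ) + 1) ~[atTop] fun n : ℕ ↦ (n : ℝ) :=
    IsEquivalent.refl.add_isLittleO (isLittleO_const_left.2
      (.inr (tendsto_norm_atTop_atTop.comp tendsto_natCast_atTop_atTop)))
  exact (IsEquivalent.refl.div
    (hsucc.rpow (r := c) fun n ↦ n.cast_nonneg).symm).tendsto_nhds_iff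

theorem hasPowerAsymptotic_comp_succ_iff :
    HasPowerAsymptotic (fun n ↦ f (n + 1)) A c ↔ HasPowerAsymptotic f A c := by
  rw [hasPowerAsymptotic_iff_tendsto_div_add_one, HasPowerAsymptotic,
    ← tendsto_add_atTop_iff_nat (f := fun n : ℕ ↦ f n / (n : ℝ) ^ c) 1]
  simp only [Nat.cast_add_one]

end Shift

section Convolution

theorem rpow_le_rpow_min_zero {x t : ℝ} (hx : 0 < x) (hxt : x ≤ t) (ht : t ≤ 1) (c : ℝ) :
    t ^ c ≤ x ^ min c 0 :=
  (Real.rpow_le_rpow_of_exponent_ge (hx.trans_le hxt) ht (min_le_left c 0)).trans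
    (Real.rpow_le_rpow_of_nonpos hx hxt (min_le_right c 0))

theorem HasPowerAsymptotic.exists_abs_div_le {f : ℕ → ℝ} {A c : ℝ}
    (hf : HasPowerAsymptotic f A c) :
    ∃ C, 0 ≤ C ∧ ∀ (k n : ℕ) (x : ℝ), k ≤ n → 0 < x → ((n : ℝ) + 1) * x ≤ k + 1 →
      |f k / ((n : ℝ) + 1) ^ c| ≤ C * x ^ min c 0 := by
  obtain ⟨C, hC⟩ := (Metric.isBounded_range_of_tendsto _
    (hasPowerAsymptotic_iff_tendsto_div_add_one.1 hf)).exists_norm_le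
  rw [Set.forall_mem_range] at hC
  have hC0 : 0 ≤ C := (norm_nonneg _).trans (hC 0)
  refine ⟨C, hC0, fun k n x hkn hx hxk ↦ ?_⟩
  have hn : (0 : ℝ) < n + 1 := n.cast_add_one_pos
  have hk : (0 : ℝ) < k + 1 := k.cast_add_one_pos
  have hfactor : f k / ((n : ℝ) + 1) ^ c =
      f k / ((k : ℝ) + 1) ^ c * (((k : ℝ) + 1) / (n + 1)) ^ c := by
    rw [Real.div_rpow hk.le hn.le, div_mul_div_cancel₀ (Real.rpow_pos_of_pos hk c).ne']
  rw [hfactor, abs_mul, abs_of_nonneg (Real.rpow_nonneg (div_nonneg hk.le hn.le) c)]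
  refine mul_le_mul (hC k) (rpow_le_rpow_min_zero hx ?_ ?_ c) (by positivity) hC0
  · rwa [le_div_iff₀' hn]
  · exact (div_le_one hn).2 (by gcongr)

theorem integrableOn_rpow_mul_one_sub_rpow_s17 {c d : ℝ} (hc : -1 < c) (hd : -1 < d) :
    IntegrableOn (fun x : ℝ ↦ x ^ c * (1 - x) ^ d) (Set.Ioo 0 1) := by
  have hc' : 0 < c + 1 := neg_lt_iff_pos_add.1 hc
  have hd' : 0 < d + 1 := neg_lt_iff_pos_add.1 hd
  have hbeta : 0 < 1 / beta (c + 1) (d + 1) := one_div_pos.2 (beta_pos hc' hd')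
  have hfin := lintegral_betaPDF_eq_one hc' hd'
  rw [lintegral_betaPDF, add_sub_cancel_right, add_sub_cancel_right] at hfin
  have hnonneg : ∀ᵐ x ∂volume.restrict (Set.Ioo 0 1),
      0 ≤ 1 / beta (c + 1) (d + 1) * x ^ c * (1 - x) ^ d :=
    ae_restrict_of_forall_mem measurableSet_Ioo fun x hx ↦
      mul_nonneg (mul_nonneg hbeta.le (Real.rpow_nonneg hx.1.le _))
        (Real.rpow_nonneg (sub_nonneg.2 hx.2.le) _)
  have hint := (lintegral_ofReal_ne_top_iff_integrable
    (Measurable.aestronglyMeasurable (by fun_prop)) hnonneg).1 (hfin ▸ ENNReal.one_ne_top)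
  simpa only [IntegrableOn, mul_assoc, integrable_const_mul_iff hbeta.ne'.isUnit] using hint

theorem integral_rpow_mul_one_sub_rpow_s17 {c d : ℝ} (hc : -1 < c) (hd : -1 < d) :
    ∫ x : ℝ in Set.Ioo 0 1, x ^ c * (1 - x) ^ d = beta (c + 1) (d + 1) := by
  rw [beta_eq_betaIntegralReal _ _ (neg_lt_iff_pos_add.1 hc) (neg_lt_iff_pos_add.1 hd),
    Complex.betaIntegral, intervalIntegral.integral_of_le zero_le_one,
    integral_Ioc_eq_integral_Ioo]
  have hcomplex : Set.EqOn
      (fun x : ℝ ↦ (x : ℂ) ^ (((c + 1 : ℝ) : ℂ) - 1) * (1 - (x : ℂ)) ^ (((d + 1 : ℝ) : ℂ) - 1))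
      (fun x : ℝ ↦ ((x ^ c * (1 - x) ^ d : ℝ) : ℂ)) (Set.Ioo 0 1) := by
    intro x ⟨hx0, hx1⟩
    simp only [Complex.ofReal_add, add_sub_cancel_right, Complex.ofReal_mul,
      Complex.ofReal_cpow hx0.le, Complex.ofReal_cpow (sub_nonneg.2 hx1.le),
      Complex.ofReal_sub, Complex.ofReal_one]
  rw [setIntegral_congr_fun measurableSet_Ioo hcomplex, integral_complex_ofReal, Complex.ofReal_re]

theorem integral_Ioo_floor_mul {E : Type*} [NormedAddCommGroup E] [NormedSpace ℝ E]
    [CompleteSpace E] (h : ℕ → E) (n : ℕ) :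
    ∫ x : ℝ in Set.Ioo 0 1, h ⌊((n : ℝ) + 1) * x⌋₊ =
      ((n : ℝ) + 1)⁻¹ • ∑ k ∈ Finset.range (n + 1), h k := by
  have hn : (n : ℝ) + 1 ≠ 0 := n.cast_add_one_ne_zero
  have hfloor (k : ℕ) : Set.EqOn (fun _ ↦ h k) (fun y : ℝ ↦ h ⌊y⌋₊)
      (Set.Ioo (k : ℝ) (k + 1 : ℕ)) := by
    intro y ⟨hky, hyk⟩
    simp only [Nat.floor_eq_on_Ico k y ⟨hky.le, by exact_mod_cast hyk⟩]
  have hblock (k : ℕ) : ∫ y in (k : ℝ)..(k + 1 : ℕ), h ⌊y⌋₊ = h k := by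
    rw [← intervalIntegral.integral_congr_Ioo_of_le (by simp) (hfloor k)]
    simp
  have hint (k : ℕ) : IntervalIntegrable (fun y : ℝ ↦ h ⌊y⌋₊) volume k (k + 1 : ℕ) :=
    intervalIntegrable_const.congr_uIoo (by rw [Set.uIoo_of_le (by simp)]; exact hfloor k)
  rw [← integral_Ioc_eq_integral_Ioo, ← intervalIntegral.integral_of_le zero_le_one,
    intervalIntegral.integral_comp_mul_left (fun y ↦ h ⌊y⌋₊) hn, mul_zero, mul_one]
  congr 1
  have hsum := intervalIntegral.sum_integral_adjacent_intervals (n := n + 1) fun k _ ↦ hint k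
  rw [Finset.sum_congr rfl fun k _ ↦ hblock k, Nat.cast_zero, Nat.cast_succ] at hsum
  exact hsum.symm

theorem floor_add_one_mul_le {x : ℝ} (hx : x < 1) (n : ℕ) : ⌊((n : ℝ) + 1) * x⌋₊ ≤ n := by
  refine Nat.lt_succ_iff.1 ((Nat.floor_lt' n.succ_ne_zero).2 ?_)
  rw [Nat.cast_succ]
  exact mul_lt_of_lt_one_right n.cast_add_one_pos hx

theorem tendsto_floor_add_one_mul_div {x : ℝ} (hx : 0 ≤ x) :
    Tendsto (fun n : ℕ ↦ (⌊((n : ℝ) + 1) * x⌋₊ : ℝ) / (n + 1)) atTop (𝓝 x) := by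
  simpa only [Function.comp_def, mul_comm x] using (tendsto_nat_floor_mul_div_atTop hx).comp
    (tendsto_natCast_atTop_atTop.atTop_add tendsto_const_nhds (C := (1 : ℝ)))

/-- The step function on `(0, 1)` whose integral is the convolution of `f` and `g` at `n`,
normalised by `(n + 1) ^ (c + d + 1)`; its limit is a multiple of the beta integrand. -/
noncomputable def convolutionStep (f g : ℕ → ℝ) (c d : ℝ) (n : ℕ) (x : ℝ) : ℝ :=
  f ⌊((n : ℝ) + 1) * x⌋₊ / ((n : ℝ) + 1) ^ c *
    (g (n - ⌊((n : ℝ) + 1) * x⌋₊) / ((n : ℝ) + 1) ^ d)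

variable {f g : ℕ → ℝ} {A B c d : ℝ}

theorem measurable_convolutionStep (n : ℕ) : Measurable (convolutionStep f g c d n) :=
  (measurable_from_nat (f := fun k ↦ f k / ((n : ℝ) + 1) ^ c *
    (g (n - k) / ((n : ℝ) + 1) ^ d))).comp
    (Nat.measurable_floor.comp (measurable_const_mul _))

theorem integral_convolutionStep (n : ℕ) :
    ∫ x in Set.Ioo 0 1, convolutionStep f g c d n x =
      (∑ ij ∈ antidiagonal n, f ij.1 * g ij.2) / ((n : ℝ) + 1) ^ (c + d + 1) := by
  have hn : (0 : ℝ) < n + 1 := n.cast_add_one_pos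
  have hpow : ((n : ℝ) + 1) ^ (c + d + 1) =
      ((n : ℝ) + 1) ^ c * ((n : ℝ) + 1) ^ d * (n + 1) := by
    rw [← Real.rpow_add hn, ← Real.rpow_add_one hn.ne']
  unfold convolutionStep
  rw [integral_Ioo_floor_mul (fun k ↦ f k / ((n : ℝ) + 1) ^ c *
      (g (n - k) / ((n : ℝ) + 1) ^ d)) n, smul_eq_mul, ← div_eq_inv_mul,
    Finset.Nat.sum_antidiagonal_eq_sum_range_succ (fun i j ↦ f i * g j), hpow]
  simp only [div_mul_div_comm, ← Finset.sum_div, div_div, Nat.succ_eq_add_one]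

theorem tendsto_convolutionStep (hf : HasPowerAsymptotic f A c)
    (hg : HasPowerAsymptotic g B d) {x : ℝ} (hx : x ∈ Set.Ioo (0 : ℝ) 1) :
    Tendsto (convolutionStep f g c d · x) atTop
      (𝓝 (A * B * (x ^ c * (1 - x) ^ d))) := by
  have hsucc : Tendsto (fun n : ℕ ↦ (n : ℝ) + 1) atTop atTop :=
    tendsto_natCast_atTop_atTop.atTop_add tendsto_const_nhds
  have hfloor := tendsto_floor_add_one_mul_div hx.1.le
  have hcofloor : Tendsto
      (fun n : ℕ ↦ ((n - ⌊((n : ℝ) + 1) * x⌋₊ : ℕ) : ℝ) / (n + 1)) atTop (𝓝 (1 - x)) := by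
    refine ((tendsto_natCast_div_add_atTop (1 : ℝ)).sub hfloor).congr fun n ↦ ?_
    rw [Nat.cast_sub (floor_add_one_mul_le hx.2 n), sub_div]
  rw [mul_mul_mul_comm]
  exact (hf.tendsto_comp hx.1 hsucc hfloor).mul
    (hg.tendsto_comp (sub_pos.2 hx.2) hsucc hcofloor)

theorem exists_abs_convolutionStep_le (hf : HasPowerAsymptotic f A c)
    (hg : HasPowerAsymptotic g B d) :
    ∃ C, ∀ (n : ℕ), ∀ x ∈ Set.Ioo (0 : ℝ) 1, |convolutionStep f g c d n x| ≤
      C * (x ^ min c 0 * (1 - x) ^ min d 0) := by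
  obtain ⟨C, hC0, hC⟩ := hf.exists_abs_div_le
  obtain ⟨D, -, hD⟩ := hg.exists_abs_div_le
  refine ⟨C * D, fun n x ⟨hx0, hx1⟩ ↦ ?_⟩
  set k := ⌊((n : ℝ) + 1) * x⌋₊
  have hkn : k ≤ n := floor_add_one_mul_le hx1 n
  have hleft : ((n : ℝ) + 1) * x ≤ k + 1 := (Nat.lt_floor_add_one _).le
  have hright : ((n : ℝ) + 1) * (1 - x) ≤ (n - k : ℕ) + 1 := by
    have hfloor : (k : ℝ) ≤ (n + 1) * x := Nat.floor_le (by positivity)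
    rw [Nat.cast_sub hkn]
    linarith
  rw [convolutionStep, abs_mul, mul_mul_mul_comm]
  exact mul_le_mul (hC k n x hkn hx0 hleft)
    (hD (n - k) n (1 - x) (n.sub_le k) (sub_pos.2 hx1) hright) (abs_nonneg _) (by positivity)

theorem HasPowerAsymptotic.antidiagonal_sum (hf : HasPowerAsymptotic f A c)
    (hg : HasPowerAsymptotic g B d) (hc : -1 < c) (hd : -1 < d) :
    HasPowerAsymptotic (fun n ↦ ∑ ij ∈ antidiagonal n, f ij.1 * g ij.2)
      (A * B * beta (c + 1) (d + 1)) (c + d + 1) := by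
  obtain ⟨C, hC⟩ := exists_abs_convolutionStep_le hf hg
  rw [hasPowerAsymptotic_iff_tendsto_div_add_one, ← integral_rpow_mul_one_sub_rpow_s17 hc hd,
    ← integral_const_mul]
  simp only [← integral_convolutionStep]
  refine tendsto_integral_of_dominated_convergence _
    (fun n ↦ (measurable_convolutionStep n).aestronglyMeasurable)
    ((integrableOn_rpow_mul_one_sub_rpow_s17 (lt_min hc neg_one_lt_zero)
      (lt_min hd neg_one_lt_zero)).const_mul C)
    (fun n ↦ ae_restrict_of_forall_mem measurableSet_Ioo (hC n))
    (ae_restrict_of_forall_mem measurableSet_Ioo fun x hx ↦ tendsto_convolutionStep hf hg hx)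

end Convolution

section DyckMatchings

theorem sq_centralBinom_div_four_pow (n : ℕ) :
    ((n.centralBinom : ℝ) / 4 ^ n) ^ 2 * (2 * n + 1) = (Real.Wallis.W n)⁻¹ := by
  have hfactorial : ((2 * n).factorial : ℝ) = n.centralBinom * n.factorial ^ 2 := by
    have := Nat.choose_mul_factorial_mul_factorial (Nat.le_mul_of_pos_left n two_pos)
    rw [show 2 * n - n = n by omega, mul_assoc, ← sq] at this
    exact_mod_cast this.symm
  have hn : (n.factorial : ℝ) ≠ 0 := Nat.cast_ne_zero.2 n.factorial_ne_zero
  rw [Real.Wallis.W_eq_factorial_ratio, hfactorial, pow_mul 2 4 n,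
    show (2 : ℝ) ^ 4 = 4 ^ 2 by norm_num, pow_right_comm]
  field_simp

theorem hasPowerAsymptotic_centralBinom_div_four_pow :
    HasPowerAsymptotic (fun n ↦ (n.centralBinom : ℝ) / 4 ^ n) (√Real.pi)⁻¹ (-(1 / 2)) := by
  have hsq := (Real.Wallis.tendsto_W_nhds_pi_div_two.inv₀ (by positivity)).mul
    Stirling.tendsto_self_div_two_mul_self_add_one
  have hlim := hsq.sqrt
  rw [show (Real.pi / 2)⁻¹ * (1 / 2) = Real.pi⁻¹ by field_simp, Real.sqrt_inv] at hlim
  refine hlim.congr fun n ↦ ?_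
  have hn : (2 * n + 1 : ℝ) ≠ 0 := by positivity
  rw [← sq_centralBinom_div_four_pow, mul_assoc, mul_div_cancel₀ _ hn,
    Real.sqrt_mul (sq_nonneg _), Real.sqrt_sq (by positivity), Real.sqrt_eq_rpow,
    Real.rpow_neg n.cast_nonneg, div_inv_eq_mul]

theorem hasPowerAsymptotic_catalan_div_four_pow :
    HasPowerAsymptotic (fun n ↦ (catalan n : ℝ) / 4 ^ n) (√Real.pi)⁻¹ (-(3 / 2)) := by
  have hsucc : HasPowerAsymptotic (fun n ↦ ((n + 1 : ℕ) : ℝ)) 1 1 :=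
    hasPowerAsymptotic_comp_succ_iff.2 .natCast
  convert! hasPowerAsymptotic_centralBinom_div_four_pow.mul (hsucc.inv one_ne_zero) using 1
  · ext n
    rw [← succ_mul_catalan_eq_centralBinom, Nat.cast_mul, mul_div_assoc, mul_comm,
      inv_mul_cancel_left₀ (Nat.cast_ne_zero.2 n.succ_ne_zero)]
  · rw [inv_one, mul_one]
  · norm_num

theorem hasPowerAsymptotic_catalan_mul_rpow (p : ℝ) :
    HasPowerAsymptotic (fun n ↦ (catalan n : ℝ) / 4 ^ n * (2 * n + 1) ^ p)
      ((√Real.pi)⁻¹ * 2 ^ p) (p - 3 / 2) := by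
  have hodd : HasPowerAsymptotic (fun n ↦ 2 * (n : ℝ) + 1) 2 1 := by
    simpa using ((HasPowerAsymptotic.const 2).mul .natCast).add_of_lt (.const 1) (by norm_num)
  convert hasPowerAsymptotic_catalan_div_four_pow.mul (hodd.rpow two_pos p) using 1
  ring

theorem hasPowerAsymptotic_dyckEdgeCount_succ_zero :
    HasPowerAsymptotic (fun n ↦ dyckEdgeCount (n + 1) 0 / 4 ^ (n + 1))
      (2 * √Real.pi)⁻¹ (1 / 2) := by
  have hmain := ((HasPowerAsymptotic.const (1 / 2)).mul
    (HasPowerAsymptotic.natCast.mul hasPowerAsymptotic_centralBinom_div_four_pow)).add_of_lt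
    (.const (1 / 4)) (by norm_num)
  convert! hasPowerAsymptotic_comp_succ_iff.2 hmain using 1
  · ext n
    simp only [dyckEdgeCount, catalan_zero, Nat.centralBinom, pow_succ, Nat.sub_zero,
      Nat.add_sub_cancel]
    push_cast
    field_simp
    ring
  · rw [mul_inv]; ring
  · norm_num

theorem dyckEdgeCount_add (k m : ℕ) :
    dyckEdgeCount (k + m) k = catalan k * dyckEdgeCount m 0 := by
  simp [dyckEdgeCount]

theorem dyckCostUS_succ (p : ℝ) (n : ℕ) :
    dyckCostUS p (n + 1) = (((n + 1).centralBinom : ℝ) / 4 ^ (n + 1))⁻¹ *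
      ∑ ij ∈ antidiagonal n, (catalan ij.1 : ℝ) / 4 ^ ij.1 * (2 * ij.1 + 1) ^ p *
        (dyckEdgeCount (ij.2 + 1) 0 / 4 ^ (ij.2 + 1)) := by
  have hterm : ∀ ij ∈ antidiagonal n,
      dyckEdgeCount (n + 1) ij.1 * (2 * (ij.1 : ℝ) + 1) ^ p =
        4 ^ (n + 1) * ((catalan ij.1 : ℝ) / 4 ^ ij.1 * (2 * ij.1 + 1) ^ p *
          (dyckEdgeCount (ij.2 + 1) 0 / 4 ^ (ij.2 + 1))) := by
    rintro ⟨i, j⟩ hij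
    obtain rfl : i + j = n := Finset.HasAntidiagonal.mem_antidiagonal.1 hij
    rw [add_assoc, dyckEdgeCount_add, pow_add]
    field_simp
  rw [dyckCostUS, ← Nat.centralBinom_eq_two_mul_choose, inv_div, div_eq_inv_mul, mul_assoc]
  congr 1
  rw [Finset.mul_sum, ← Finset.sum_congr rfl hterm,
    Finset.Nat.sum_antidiagonal_eq_sum_range_succ_mk]

end DyckMatchings

theorem dyckCostUS_leading_high_p_general (p : ℝ) (hp : 1 / 2 < p) :
    Tendsto (fun N : ℕ ↦ dyckCostUS p N / (N : ℝ) ^ (1 / 2 + p)) atTop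
      (𝓝 ((2 : ℝ) ^ p * Real.Gamma (p - 1 / 2) / (4 * Real.Gamma (p + 1)))) := by
  have hconv := (hasPowerAsymptotic_catalan_mul_rpow p).antidiagonal_sum
    hasPowerAsymptotic_dyckEdgeCount_succ_zero (by linarith) (by norm_num)
  have hnorm := (hasPowerAsymptotic_comp_succ_iff.2
    hasPowerAsymptotic_centralBinom_div_four_pow).inv (by positivity)
  have hcost := hnorm.mul hconv
  simp only [← dyckCostUS_succ] at hcost
  have hexponent : - -(1 / 2) + (p - 3 / 2 + 1 / 2 + 1) = 1 / 2 + p := by ring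
  have hconstant : (√Real.pi)⁻¹⁻¹ * ((√Real.pi)⁻¹ * 2 ^ p * (2 * √Real.pi)⁻¹ *
      beta (p - 3 / 2 + 1) (1 / 2 + 1)) =
      2 ^ p * Real.Gamma (p - 1 / 2) / (4 * Real.Gamma (p + 1)) := by
    rw [beta, Real.Gamma_add_one one_half_pos.ne', Real.Gamma_one_half_eq,
      show p - 3 / 2 + 1 = p - 1 / 2 by ring, show p - 1 / 2 + (1 / 2 + 1) = p + 1 by ring]
    field_simp
    ring
  rw [hexponent, hconstant] at hcost
  exact hasPowerAsymptotic_comp_succ_iff.1 hcost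

theorem dyckCostUS_leading_high_p (p : ℝ) (hp0 : 1 / 2 < p) (hp1 : p < 1) :
    Filter.Tendsto
      (fun N : ℕ => dyckCostUS p N / (N : ℝ) ^ (1 / 2 + p))
      Filter.atTop
      (nhds ((2 : ℝ) ^ p * Real.Gamma (p - 1 / 2) / (4 * Real.Gamma (p + 1)))) :=
  dyckCostUS_leading_high_p_general p hp0
end
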